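/- arXiv:2306.00334 — 2 statements merged into one kernel-verified Lean document; each statement's English description precedes it below -/
import Mathlib

section
/- Let F be a totally real number field and L a positive definite integral O_F-lattice of class number one, and n a positive integer. (i) If L is locally n-ADC, then L is globally n-ADC. (ii) If L is O_F-maximal, then L is globally n-ADC. -/
/-
Quadratic lattices over (local and global) fields, following
"On n-ADC integral quadratic lattices over totally real number fields".

A non-archimedean local field of characteristic ≠ 2 is formalized as a field `K`
together with a valuation subring `O` of `K` which is a complete discrete valuation
ring with finite residue field (completeness is expressed as adic completeness with
respect to the maximal ideal); `K` is automatically the fraction field of `O`.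
-/

noncomputable section

namespace QLat

variable {K : Type} [Field K]

/-- The bilinear form associated to a quadratic form `Q`, i.e. `B x y = (Q(x+y)-Q(x)-Q(y))/2`,
so that `B x x = Q x`. -/
def bil {V : Type} [AddCommGroup V] [Module K V] (Q : QuadraticForm K V) (x y : V) : K :=
  (2 : K)⁻¹ * QuadraticMap.polar (⇑Q) x y

/-- A quadratic form (space) is nondegenerate. -/
def Nondeg {V : Type} [AddCommGroup V] [Module K V] (Q : QuadraticForm K V) : Prop :=
  ∀ x : V, (∀ y : V, QuadraticMap.polar (⇑Q) x y = 0) → x = 0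

/-- The `O`-span of a subset `t` of a `K`-vector space: all finite `O`-linear
combinations of elements of `t`. -/
def ospan (O : Subring K) {V : Type} [AddCommGroup V] [Module K V] (t : Set V) : Set V :=
  {x | ∃ (m : ℕ) (c : Fin m → K) (g : Fin m → V),
    (∀ i, c i ∈ O) ∧ (∀ i, g i ∈ t) ∧ x = ∑ i, c i • g i}

/-- An `O`-lattice in `V`: a finitely generated `O`-submodule of `V`. -/
def IsLattice (O : Subring K) {V : Type} [AddCommGroup V] [Module K V] (L : Set V) : Prop :=
  ∃ t : Finset V, L = ospan O (t : Set V)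

/-- An `O`-lattice on `V`: a finitely generated `O`-submodule of `V` spanning `V` over `K`. -/
def IsLatticeOn (O : Subring K) {V : Type} [AddCommGroup V] [Module K V] (L : Set V) : Prop :=
  IsLattice O L ∧ Submodule.span K L = ⊤

/-- The lattice `L` is integral: `𝔫(L) ⊆ O`, i.e. all values of `Q` on `L` lie in `O`. -/
def IsIntegral (O : Subring K) {V : Type} [AddCommGroup V] [Module K V]
    (Q : QuadraticForm K V) (L : Set V) : Prop :=
  ∀ x ∈ L, Q x ∈ O

/-- The quadratic space `(V,Q)` represents the quadratic space `(W,Q')`. -/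
def SpaceRep {W V : Type} [AddCommGroup W] [Module K W] [AddCommGroup V] [Module K V]
    (Q' : QuadraticForm K W) (Q : QuadraticForm K V) : Prop :=
  ∃ σ : W →ₗ[K] V, Function.Injective σ ∧ ∀ x, Q (σ x) = Q' x

/-- The quadratic spaces `(W,Q')` and `(V,Q)` are isometric. -/
def SpaceIsom {W V : Type} [AddCommGroup W] [Module K W] [AddCommGroup V] [Module K V]
    (Q' : QuadraticForm K W) (Q : QuadraticForm K V) : Prop :=
  ∃ σ : W ≃ₗ[K] V, ∀ x, Q (σ x) = Q' x

/-- The lattice `M` (in `(V,Q)`) represents the lattice `N` (a full lattice in `(W,Q')`):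
there is an injective form-preserving `K`-linear map carrying `N` into `M`.  (For a full
lattice `N` this is equivalent to the existence of an injective form-preserving
`O`-linear map `N → M`, since `K` is the fraction field of `O`.) -/
def LatRep {W V : Type} [AddCommGroup W] [Module K W] [AddCommGroup V] [Module K V]
    (Q' : QuadraticForm K W) (Q : QuadraticForm K V) (N : Set W) (M : Set V) : Prop :=
  ∃ σ : W →ₗ[K] V, Function.Injective σ ∧ (∀ x, Q (σ x) = Q' x) ∧ σ '' N ⊆ M

/-- The lattices `N` (full in `(W,Q')`) and `M` (in `(V,Q)`) are isometric. -/
def LatIsom {W V : Type} [AddCommGroup W] [Module K W] [AddCommGroup V] [Module K V]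
    (Q' : QuadraticForm K W) (Q : QuadraticForm K V) (N : Set W) (M : Set V) : Prop :=
  ∃ σ : W →ₗ[K] V, Function.Injective σ ∧ (∀ x, Q (σ x) = Q' x) ∧ σ '' N = M

/-- The lattice `L` is `O`-maximal: it is integral and is not properly contained in any
(finitely generated) lattice on the same subspace with integral norm. -/
def IsMaximal (O : Subring K) {V : Type} [AddCommGroup V] [Module K V]
    (Q : QuadraticForm K V) (L : Set V) : Prop :=
  IsIntegral O Q L ∧
    ∀ L' : Set V, IsLattice O L' → Submodule.span K L' = Submodule.span K L →
      L ⊆ L' → IsIntegral O Q L' → L' = L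

/-- The lattice `L` is `n`-ADC: every integral `O`-lattice `N` of rank `n` (on a
nondegenerate quadratic space `W` of dimension `n`) whose ambient space is represented by
the space `(V,Q) = K·L` is represented by `L`. -/
def IsADC (O : Subring K) {V : Type} [AddCommGroup V] [Module K V]
    (Q : QuadraticForm K V) (L : Set V) (n : ℕ) : Prop :=
  ∀ (W : Type) [AddCommGroup W] [Module K W] (Q' : QuadraticForm K W),
    Nondeg Q' → Module.finrank K W = n →
    ∀ N : Set W, IsLatticeOn O N → IsIntegral O Q' N →
      SpaceRep Q' Q → LatRep Q' Q N L

/-- The lattice `L` is `n`-universal: it represents every integral `O`-lattice of rank `n`. -/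
def IsUniversal (O : Subring K) {V : Type} [AddCommGroup V] [Module K V]
    (Q : QuadraticForm K V) (L : Set V) (n : ℕ) : Prop :=
  ∀ (W : Type) [AddCommGroup W] [Module K W] (Q' : QuadraticForm K W),
    Nondeg Q' → Module.finrank K W = n →
    ∀ N : Set W, IsLatticeOn O N → IsIntegral O Q' N → LatRep Q' Q N L

end QLat

open scoped TensorProduct
open IsDedekindDomain

namespace QGlob

/-- Scalar-commutation instance for the completed field, registered to help instance
search for modules over `F_v`. -/
noncomputable instance (F : Type) [Field F] [NumberField F]
    (v : HeightOneSpectrum (NumberField.RingOfIntegers F)) :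
    SMulCommClass F (v.adicCompletion F) (v.adicCompletion F) :=
  Algebra.to_smulCommClass


variable (F : Type) [Field F] [NumberField F]

/-- `F` is totally real: every infinite place of `F` is real. -/
def TotallyReal : Prop := ∀ v : NumberField.InfinitePlace F, v.IsReal

/-- The ring of integers `O_F` of `F`, as a subring of `F`. -/
def OF : Subring F := (integralClosure ℤ F).toSubring

/-- A quadratic form over the totally real field `F` is positive definite if its values
at nonzero vectors are positive under every real embedding of `F`. -/
def PosDef {V : Type} [AddCommGroup V] [Module F V] (Q : QuadraticForm F V) : Prop :=
  ∀ (φ : F →+* ℝ) (x : V), x ≠ 0 → 0 < φ (Q x)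

/-- The completion `F_v` of `F` at a finite place `v`. -/
abbrev Fv (v : HeightOneSpectrum (NumberField.RingOfIntegers F)) : Type :=
  v.adicCompletion F

/-- The ring of integers of `F_v`, as a subring of `F_v`. -/
def Ov (v : HeightOneSpectrum (NumberField.RingOfIntegers F)) : Subring (Fv F v) :=
  (v.adicCompletionIntegers F).toSubring

/-- The completion `V_v = F_v ⊗_F V` of a quadratic space `V` over `F` at `v`. -/
abbrev Vv (V : Type) [AddCommGroup V] [Module F V]
    (v : HeightOneSpectrum (NumberField.RingOfIntegers F)) : Type :=
  (Fv F v) ⊗[F] V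

/-- The extension of a quadratic form `Q` on `V` to `V_v`. -/
noncomputable def Qv {V : Type} [AddCommGroup V] [Module F V] (Q : QuadraticForm F V)
    (v : HeightOneSpectrum (NumberField.RingOfIntegers F)) :
    QuadraticForm (Fv F v) (Vv F V v) :=
  letI : Invertible (2 : F) := invertibleOfNonzero two_ne_zero
  Q.baseChange (Fv F v)

/-- The canonical map `V → V_v`. -/
noncomputable def toVv {V : Type} [AddCommGroup V] [Module F V]
    (v : HeightOneSpectrum (NumberField.RingOfIntegers F)) : V → Vv F V v :=
  fun x => (1 : Fv F v) ⊗ₜ[F] x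

/-- The completion `L_v = O_{F_v} ⊗ L` of a lattice `L ⊆ V` at `v`, i.e. the
`O_{F_v}`-span of the image of `L` in `V_v`. -/
noncomputable def Lv {V : Type} [AddCommGroup V] [Module F V] (L : Set V)
    (v : HeightOneSpectrum (NumberField.RingOfIntegers F)) : Set (Vv F V v) :=
  QLat.ospan (Ov F v) (toVv F v '' L)

variable {V : Type} [AddCommGroup V] [Module F V]

/-- `L` is globally `n`-ADC: every positive definite integral `O_F`-lattice `N` of rank
`n` whose ambient space `F·N` is represented by `F·L` is represented by `L`. -/
def IsGlobADC (Q : QuadraticForm F V) (L : Set V) (n : ℕ) : Prop :=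
  ∀ (W : Type) [AddCommGroup W] [Module F W] (Q' : QuadraticForm F W),
    QLat.Nondeg Q' → PosDef F Q' → Module.finrank F W = n →
    ∀ N : Set W, QLat.IsLatticeOn (OF F) N → QLat.IsIntegral (OF F) Q' N →
      QLat.SpaceRep Q' Q → QLat.LatRep Q' Q N L

/-- `L` is globally `n`-universal: it represents every positive definite integral
`O_F`-lattice of rank `n`. -/
def IsGlobUniversal (Q : QuadraticForm F V) (L : Set V) (n : ℕ) : Prop :=
  ∀ (W : Type) [AddCommGroup W] [Module F W] (Q' : QuadraticForm F W),
    QLat.Nondeg Q' → PosDef F Q' → Module.finrank F W = n →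
    ∀ N : Set W, QLat.IsLatticeOn (OF F) N → QLat.IsIntegral (OF F) Q' N →
      QLat.LatRep Q' Q N L

/-- `L` is `n`-regular: it represents every positive definite integral `O_F`-lattice `N`
of rank `n` which is represented by `L` locally at every finite place. -/
def IsNRegular (Q : QuadraticForm F V) (L : Set V) (n : ℕ) : Prop :=
  ∀ (W : Type) [AddCommGroup W] [Module F W] (Q' : QuadraticForm F W),
    QLat.Nondeg Q' → PosDef F Q' → Module.finrank F W = n →
    ∀ N : Set W, QLat.IsLatticeOn (OF F) N → QLat.IsIntegral (OF F) Q' N →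
      (∀ v : HeightOneSpectrum (NumberField.RingOfIntegers F),
        QLat.LatRep (Qv F Q' v) (Qv F Q v) (Lv F N v) (Lv F L v)) →
      QLat.LatRep Q' Q N L

/-- `L` is locally `n`-ADC: `L_v` is `n`-ADC for every finite place `v`. -/
def IsLocADC (Q : QuadraticForm F V) (L : Set V) (n : ℕ) : Prop :=
  ∀ v : HeightOneSpectrum (NumberField.RingOfIntegers F),
    QLat.IsADC (Ov F v) (Qv F Q v) (Lv F L v) n

/-- `L` is locally `n`-universal: `L_v` is `n`-universal for every finite place `v`. -/
def IsLocUniversal (Q : QuadraticForm F V) (L : Set V) (n : ℕ) : Prop :=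
  ∀ v : HeightOneSpectrum (NumberField.RingOfIntegers F),
    QLat.IsUniversal (Ov F v) (Qv F Q v) (Lv F L v) n

/-- `L` has class number one: every `O_F`-lattice in the genus of `L` (i.e. every lattice
on a space isometric to `F·L` which is isometric to `L` at every finite place) is
isometric to `L`. -/
def ClassNumberOne (Q : QuadraticForm F V) (L : Set V) : Prop :=
  ∀ (W : Type) [AddCommGroup W] [Module F W] (Q' : QuadraticForm F W),
    QLat.Nondeg Q' →
    ∀ N : Set W, QLat.IsLatticeOn (OF F) N →
      QLat.SpaceIsom Q' Q →
      (∀ v : HeightOneSpectrum (NumberField.RingOfIntegers F),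
        QLat.LatIsom (Qv F Q' v) (Qv F Q v) (Lv F N v) (Lv F L v)) →
      QLat.LatIsom Q' Q N L

end QGlob

open QLat QGlob

/-!
Over a henselian discrete valuation ring with fraction field of characteristic not two, all maximal
integral lattices on a nondegenerate quadratic space are isometric: on an anisotropic space the
vectors of integral value form the only one, and otherwise a maximal lattice splits off an integral
hyperbolic plane, and any two such planes are interchanged by an isometry of the space. Hence a
maximal lattice over such a ring is `n`-ADC, because an integral lattice in its space lies in some
maximal one.

Globally, let `σ` embed the space of an integral lattice `N` into that of `L`, where `L` is locally
`n`-ADC. By Witt's theorem, at each finite place `v` the representation of `N_v` by `L_v` is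
`g_v ∘ σ` for an isometry `g_v` of the space of `L_v`, and `g_v = 1` does at all but finitely
many `v`. The vectors `x` with `g_v x ∈ L_v` for all `v` form a lattice in the genus of `L` that
contains `σ N`. As `L` has class number one, this lattice is isometric to `L`, and so `L` represents
`N`. A maximal lattice is maximal at every finite place, which reduces (ii) to (i).
-/

open QuadraticMap (polar polar_add_left polar_add_right polar_comm polar_neg_left polar_neg_right
  polar_self polar_smul_left polar_smul_right polar_sub_right polar_zero_left)

section Witt

variable {K V W : Type*} [Field K] [AddCommGroup V] [Module K V] [AddCommGroup W] [Module K W]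
  {Q : QuadraticForm K V} {Q' : QuadraticForm K W}

theorem polar_isometry (g : Q' →qᵢ Q) (x y : W) :
    polar Q (g x) (g y) = polar Q' x y := by
  simp only [polar, ← map_add, g.map_app]

theorem polar_isometryEquiv (g : Q'.IsometryEquiv Q) (x y : W) :
    polar Q (g x) (g y) = polar Q' x y :=
  polar_isometry g.toIsometry x y

/-- The reflection `x ↦ x - (polar Q a x / Q a) • a` in an anisotropic vector `a`. It is
normalised by `polar` rather than by the associated bilinear form, so it makes sense in every
characteristic. -/
def anisotropicReflection (Q : QuadraticForm K V) {a : V} (ha : Q a ≠ 0) : Q.IsometryEquiv Q where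
  toLinearEquiv := Module.reflection (x := a) (f := (Q a)⁻¹ • Q.polarBilin a) <| by
    simp [polar_self, mul_left_comm, ha]
  map_app' x := by
    simp only [AddHom.toFun_eq_coe, LinearMap.coe_toAddHom, LinearEquiv.coe_coe,
      Module.reflection_apply, LinearMap.smul_apply, QuadraticMap.polarBilin_apply_apply,
      sub_eq_add_neg, ← neg_smul, QuadraticMap.map_add Q x, QuadraticMap.map_smul,
      polar_smul_right, polar_comm Q x a, smul_eq_mul]
    field_simp
    ring

theorem anisotropicReflection_apply {a : V} (ha : Q a ≠ 0) (x : V) :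
    anisotropicReflection Q ha x = x - ((Q a)⁻¹ * polar Q a x) • a :=
  rfl

theorem anisotropicReflection_apply_self {a : V} (ha : Q a ≠ 0) :
    anisotropicReflection Q ha a = -a := by
  rw [anisotropicReflection_apply, polar_self, nsmul_eq_mul, mul_left_comm, inv_mul_cancel₀ ha]
  module

theorem anisotropicReflection_apply_of_polar_eq_zero {a : V} (ha : Q a ≠ 0) {x : V}
    (hx : polar Q a x = 0) : anisotropicReflection Q ha x = x := by
  simp [anisotropicReflection_apply, hx]

theorem anisotropicReflection_apply_of_polar_eq {a : V} (ha : Q a ≠ 0) {x : V}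
    (hx : polar Q a x = Q a) : anisotropicReflection Q ha x = x - a := by
  simp [anisotropicReflection_apply, hx, ha]

theorem exists_isometryEquiv_apply_eq (h2 : (2 : K) ≠ 0) {z w : V} (hzw : Q z = Q w)
    (hz : Q z ≠ 0) :
    ∃ h : Q.IsometryEquiv Q, h z = w ∧
      ∀ x, polar Q x z = 0 → polar Q x w = 0 → h x = x := by
  by_cases hsub : Q (z - w) = 0
  · have hadd_eq : Q (z + w) = polar Q (z + w) z := by
      simp only [polar_add_left, polar_self, QuadraticMap.map_add,
        polar_comm Q w z, hzw, two_smul]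
    have hadd : Q (z + w) ≠ 0 := by
      have parallelogram : Q (z + w) + Q (z - w) = 2 * 2 * Q z := by
        rw [sub_eq_add_neg, QuadraticMap.map_add Q, QuadraticMap.map_add Q, QuadraticMap.map_neg,
          polar_neg_right, hzw]
        ring
      rw [hsub, add_zero] at parallelogram
      simpa [parallelogram, h2] using hz
    have hw : Q w ≠ 0 := hzw ▸ hz
    refine ⟨(anisotropicReflection Q hadd).trans (anisotropicReflection Q hw), ?_, ?_⟩
    · change anisotropicReflection Q hw (anisotropicReflection Q hadd z) = w
      rw [anisotropicReflection_apply_of_polar_eq hadd hadd_eq.symm, sub_add_cancel_left, map_neg,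
        anisotropicReflection_apply_self, neg_neg]
    · intro x hxz hxw
      change anisotropicReflection Q hw (anisotropicReflection Q hadd x) = x
      rw [anisotropicReflection_apply_of_polar_eq_zero hadd,
        anisotropicReflection_apply_of_polar_eq_zero]
      · rwa [polar_comm]
      · rw [polar_comm, polar_add_right, hxz, hxw, add_zero]
  · refine ⟨anisotropicReflection Q hsub, ?_, fun x hxz hxw ↦ ?_⟩
    · rw [anisotropicReflection_apply_of_polar_eq, sub_sub_cancel]
      simp only [sub_eq_add_neg, polar_add_left, polar_neg_left,
        polar_neg_right, polar_self, QuadraticMap.map_add, QuadraticMap.map_neg,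
        polar_comm Q w z, hzw, two_smul]
    · rw [anisotropicReflection_apply_of_polar_eq_zero]
      rw [polar_comm, polar_sub_right, hxz, hxw, sub_zero]

theorem exists_isometryEquiv_eq_on_finset (h2 : (2 : K) ≠ 0) {ι : Type*} {x y : ι → V}
    (hx : Pairwise fun i j ↦ polar Q (x i) (x j) = 0)
    (hy : Pairwise fun i j ↦ polar Q (y i) (y j) = 0)
    (hxy : ∀ i, Q (x i) = Q (y i)) (hne : ∀ i, Q (x i) ≠ 0) (s : Finset ι) :
    ∃ g : Q.IsometryEquiv Q, ∀ i ∈ s, g (x i) = y i := by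
  classical
  induction s using Finset.induction_on with
  | empty => exact ⟨.refl Q, by simp⟩
  | insert j s hj ih =>
    obtain ⟨g, hg⟩ := ih
    obtain ⟨h, hjj, hfix⟩ := exists_isometryEquiv_apply_eq (Q := Q) (z := g (x j)) (w := y j) h2
      (by rw [g.map_app, hxy]) (by rw [g.map_app]; exact hne j)
    refine ⟨g.trans h, fun i hi ↦ ?_⟩
    change h (g (x i)) = y i
    obtain rfl | hi := Finset.mem_insert.mp hi
    · exact hjj
    · have hij : i ≠ j := ne_of_mem_of_not_mem hi hj
      rw [hg i hi]
      refine hfix _ ?_ (hy hij)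
      rw [← hg i hi, polar_isometryEquiv, hx hij]

/-- A hyperbolic pair: isotropic vectors `e`, `f` spanning the hyperbolic plane `(a, b) ↦ a b`. -/
structure IsHyperbolicPair (Q : QuadraticForm K V) (e f : V) : Prop where
  left_isotropic : Q e = 0
  right_isotropic : Q f = 0
  polar_eq_one : polar Q e f = 1

theorem IsHyperbolicPair.map_smul_add_smul {e f : V} (h : IsHyperbolicPair Q e f) (a b : K) :
    Q (a • e + b • f) = a * b := by
  simp [QuadraticMap.map_add, QuadraticMap.map_smul, polar_smul_left,
    polar_smul_right, h.left_isotropic, h.right_isotropic, h.polar_eq_one, mul_comm]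

theorem IsHyperbolicPair.exists_isometryEquiv (h2 : (2 : K) ≠ 0) {e f e' f' : V}
    (h : IsHyperbolicPair Q e f) (h' : IsHyperbolicPair Q e' f') :
    ∃ g : Q.IsometryEquiv Q, g e = e' ∧ g f = f' := by
  -- `e + ε • f` for `ε = ±1` is an orthogonal basis of the hyperbolic plane.
  have value {e f : V} (h : IsHyperbolicPair Q e f) (ε : ℤˣ) :
      Q (e + (ε : K) • f) = (ε : K) := by
    simpa using h.map_smul_add_smul 1 (ε : K)
  have orthogonal {e f : V} (h : IsHyperbolicPair Q e f) :
      Pairwise fun ε δ : ℤˣ ↦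
        polar Q (e + (ε : K) • f) (e + (δ : K) • f) = 0 := by
    intro ε δ hεδ
    have : polar Q f e = 1 := by rw [polar_comm, h.polar_eq_one]
    obtain rfl | rfl := Int.units_eq_one_or ε <;> obtain rfl | rfl := Int.units_eq_one_or δ <;>
      simp_all [polar_self, h.left_isotropic, h.right_isotropic, h.polar_eq_one]
  obtain ⟨g, hg⟩ := exists_isometryEquiv_eq_on_finset h2 (orthogonal h) (orthogonal h')
    (fun ε ↦ by rw [value h, value h'])
    (fun ε ↦ by
      rw [value h]
      obtain rfl | rfl := Int.units_eq_one_or ε <;> simp) Finset.univ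
  have hadd : g e + g f = e' + f' := by simpa using hg 1
  have hsub : g e - g f = e' - f' := by simpa [sub_eq_add_neg] using hg (-1)
  have he : (2 : K) • g e = (2 : K) • e' := by
    linear_combination (norm := module) hadd + hsub
  have heq : g e = e' := smul_right_injective V h2 he
  exact ⟨g, heq, by rw [heq] at hadd; exact add_left_cancel hadd⟩

end Witt

section WittNondeg

variable {K V W : Type} [Field K] [AddCommGroup V] [Module K V] [AddCommGroup W] [Module K W]
  {Q : QuadraticForm K V} {Q' : QuadraticForm K W}

theorem exists_isometryEquiv_comp_eq [FiniteDimensional K W] (h2 : (2 : K) ≠ 0)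
    (hQ' : Nondeg Q') (σ τ : Q' →qᵢ Q) : ∃ g : Q.IsometryEquiv Q, ∀ x, g (σ x) = τ x := by
  have : Invertible (2 : K) := invertibleOfNonzero h2
  obtain ⟨b, hb⟩ := LinearMap.BilinForm.exists_orthogonal_basis (B := Q'.polarBilin)
    ⟨polar_comm Q'⟩
  have hne (i) : Q' (b i) ≠ 0 := fun h0 ↦
    hb.not_isOrtho_basis_self_of_separatingLeft hQ' i <| by
      simp [polar_self, h0]
  have orthogonal (ρ : Q' →qᵢ Q) :
      Pairwise fun i j ↦ polar Q (ρ (b i)) (ρ (b j)) = 0 := fun i j hij ↦ by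
    change polar Q (ρ (b i)) (ρ (b j)) = 0
    rw [polar_isometry]
    exact hb hij
  obtain ⟨g, hg⟩ := exists_isometryEquiv_eq_on_finset h2 (orthogonal σ) (orthogonal τ)
    (by simp) (by simpa using hne) Finset.univ
  have : g.toLinearEquiv.toLinearMap ∘ₗ σ.toLinearMap = τ.toLinearMap :=
    b.ext fun i ↦ hg i (Finset.mem_univ i)
  exact ⟨g, LinearMap.congr_fun this⟩

theorem injective_of_isometry (hQ' : Nondeg Q') (σ : Q' →qᵢ Q) : Function.Injective σ := by
  refine (injective_iff_map_eq_zero σ).2 fun x hx ↦ hQ' x fun y ↦ ?_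
  rw [← polar_isometry σ, hx, polar_zero_left]

end WittNondeg

section Lattice

variable {R K V : Type*} [CommRing R] [Field K] [Algebra R K] [AddCommGroup V] [Module K V]
  [Module R V] [IsScalarTower R K V]

theorem finiteDimensional_of_isLattice (L : Submodule R V) [L.IsLattice K] :
    FiniteDimensional K V := by
  obtain ⟨t, rfl⟩ := Submodule.IsLattice.fg (M := L)
  exact ⟨t, by rw [← Submodule.span_span_of_tower R, Submodule.IsLattice.span_eq_top]⟩

variable [IsDomain R] [IsFractionRing R K]

theorem span_eq_top_iff_forall_exists_smul_mem {B : Submodule R V} :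
    Submodule.span K (B : Set V) = ⊤ ↔ ∀ x : V, ∃ c : R, c ≠ 0 ∧ c • x ∈ B := by
  refine ⟨fun hB x ↦ ?_, fun hB ↦ eq_top_iff.2 fun x _ ↦ ?_⟩
  · obtain ⟨y, hy, z, rfl⟩ := (IsLocalization.mem_span_iff (nonZeroDivisors R)).1
      (hB ▸ Submodule.mem_top : x ∈ Submodule.span K (B : Set V))
    rw [Submodule.span_eq] at hy
    refine ⟨z, nonZeroDivisors.coe_ne_zero z, ?_⟩
    rwa [← smul_assoc, IsLocalization.smul_mk'_one, IsLocalization.mk'_self', one_smul]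
  · obtain ⟨c, hc, hcx⟩ := hB x
    rw [← Submodule.smul_mem_iff _ ((FaithfulSMul.algebraMap_eq_zero_iff R K).not.2 hc),
      algebraMap_smul]
    exact Submodule.subset_span hcx

theorem span_comap_eq_top {W : Type*} [AddCommGroup W] [Module K W] [Module R W]
    [IsScalarTower R K W] {B : Submodule R V} (hB : Submodule.span K (B : Set V) = ⊤)
    (φ : W →ₗ[K] V) : Submodule.span K (B.comap (φ.restrictScalars R) : Set W) = ⊤ := by
  refine span_eq_top_iff_forall_exists_smul_mem.2 fun x ↦ ?_
  obtain ⟨c, hc, hcx⟩ := span_eq_top_iff_forall_exists_smul_mem.1 hB (φ x)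
  exact ⟨c, hc, by simpa using hcx⟩

theorem exists_smul_mem_of_fg {A B : Submodule R V} (hA : A.FG)
    (hB : Submodule.span K (B : Set V) = ⊤) : ∃ c : R, c ≠ 0 ∧ ∀ x ∈ A, c • x ∈ B := by
  induction A, hA using Submodule.fg_induction with
  | singleton x =>
    obtain ⟨c, hc, hcx⟩ := span_eq_top_iff_forall_exists_smul_mem.1 hB x
    refine ⟨c, hc, fun y hy ↦ ?_⟩
    obtain ⟨a, rfl⟩ := Submodule.mem_span_singleton.1 hy
    rw [smul_comm]
    exact B.smul_mem a hcx
  | sup A₁ A₂ _ _ ih₁ ih₂ =>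
    obtain ⟨c, hc, hcA⟩ := ih₁
    obtain ⟨d, hd, hdA⟩ := ih₂
    refine ⟨c * d, mul_ne_zero hc hd, fun z hz ↦ ?_⟩
    obtain ⟨x, hx, y, hy, rfl⟩ := Submodule.mem_sup.1 hz
    rw [smul_add, mul_smul c d y, mul_comm, mul_smul]
    exact B.add_mem (B.smul_mem d (hcA x hx)) (B.smul_mem c (hdA y hy))

end Lattice

section MaximalIntegral

variable {K V W : Type} [Field K] {O : Subring K} [AddCommGroup V] [Module K V]
  [AddCommGroup W] [Module K W] {Q : QuadraticForm K V} {Q' : QuadraticForm K W}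

theorem QLat.IsIntegral.polar_mem {L : Submodule O V} (hL : IsIntegral O Q L) {x y : V}
    (hx : x ∈ L) (hy : y ∈ L) : polar Q x y ∈ O :=
  O.sub_mem (O.sub_mem (hL _ (L.add_mem hx hy)) (hL _ hx)) (hL _ hy)

theorem QLat.IsIntegral.sup {L M : Submodule O V} (hL : IsIntegral O Q L)
    (hM : IsIntegral O Q M) (hLM : ∀ x ∈ L, ∀ y ∈ M, polar Q x y ∈ O) :
    IsIntegral O Q (L ⊔ M : Submodule O V) := by
  intro z hz
  obtain ⟨x, hx, y, hy, rfl⟩ := Submodule.mem_sup.1 hz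
  rw [QuadraticMap.map_add Q]
  exact O.add_mem (O.add_mem (hL x hx) (hM y hy)) (hLM x hx y hy)

/-- `O`-submodules of a quadratic space that are maximal among the integral ones. In contrast to
`QLat.IsMaximal`, the competing submodules need not be finitely generated, so that Zorn's lemma
produces them. -/
def IsMaximalIntegral (Q : QuadraticForm K V) (L : Submodule O V) : Prop :=
  Maximal (fun M : Submodule O V ↦ IsIntegral O Q M) L

theorem QLat.IsIntegral.exists_isMaximalIntegral_ge {L : Submodule O V}
    (hL : IsIntegral O Q L) : ∃ M : Submodule O V, L ≤ M ∧ IsMaximalIntegral Q M := by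
  refine zorn_le_nonempty₀ {M : Submodule O V | IsIntegral O Q M} (fun c hc hchain N hN ↦ ?_) L hL
  refine ⟨sSup c, fun x hx ↦ ?_, fun M hM ↦ le_sSup hM⟩
  obtain ⟨M, hM, hxM⟩ := (Submodule.mem_sSup_of_directed ⟨N, hN⟩ hchain.directedOn).1 hx
  exact hc hM x hxM

namespace IsMaximalIntegral

theorem comap {L : Submodule O V} (hL : IsMaximalIntegral Q L) (g : Q'.IsometryEquiv Q) :
    IsMaximalIntegral Q' (L.comap (g.toLinearEquiv.toLinearMap.restrictScalars O)) := by
  refine ⟨fun x hx ↦ g.map_app x ▸ hL.prop _ hx, fun M hM hLM x hx ↦ ?_⟩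
  have hmap : IsIntegral O Q (M.map (g.toLinearEquiv.toLinearMap.restrictScalars O)) := by
    rintro _ ⟨y, hy, rfl⟩
    exact (g.map_app y).symm ▸ hM y hy
  refine hL.le_of_ge hmap (fun y hy ↦ ⟨g.symm y, hLM ?_, g.apply_symm_apply y⟩) ⟨x, hx, rfl⟩
  change g (g.symm y) ∈ L
  rwa [g.apply_symm_apply]

theorem mem_of_polar_mem {L : Submodule O V} (hL : IsMaximalIntegral Q L) {x : V} (hx : Q x ∈ O)
    (hxL : ∀ y ∈ L, polar Q x y ∈ O) : x ∈ L := by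
  have hspan : IsIntegral O Q (Submodule.span O {x}) := by
    intro y hy
    obtain ⟨a, rfl⟩ := Submodule.mem_span_singleton.1 hy
    rw [QuadraticMap.map_smul_of_tower]
    exact O.mul_mem (a * a).2 hx
  refine hL.le_of_ge (hL.prop.sup hspan fun y hy z hz ↦ ?_) le_sup_left
    (Submodule.mem_sup_right (Submodule.mem_span_singleton_self x))
  obtain ⟨a, rfl⟩ := Submodule.mem_span_singleton.1 hz
  rw [QuadraticMap.polar_smul_right_of_tower, polar_comm]
  exact O.mul_mem a.2 (hxL y hy)

end IsMaximalIntegral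

theorem QLat.IsIntegral.exists_isMaximalIntegral_ge_of_fg [IsFractionRing O K]
    {A L : Submodule O V} (hA : IsIntegral O Q A) (hfg : A.FG) (hL : IsIntegral O Q L)
    (hspan : Submodule.span K (L : Set V) = ⊤) :
    ∃ M : Submodule O V, A ≤ M ∧ IsMaximalIntegral Q M ∧ Submodule.span K (M : Set V) = ⊤ := by
  obtain ⟨c, hc, hcA⟩ := exists_smul_mem_of_fg hfg hspan
  have hcL : IsIntegral O Q (L.map (LinearMap.lsmul O V c)) := by
    rintro _ ⟨y, hy, rfl⟩
    exact hL _ (L.smul_mem c hy)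
  obtain ⟨M, hM, hmax⟩ := IsIntegral.exists_isMaximalIntegral_ge (hA.sup hcL <| by
    rintro x hx _ ⟨y, hy, rfl⟩
    change polar Q x (c • y) ∈ O
    rw [QuadraticMap.polar_smul_right_of_tower, ← QuadraticMap.polar_smul_left_of_tower]
    exact hL.polar_mem (hcA x hx) hy)
  refine ⟨M, le_sup_left.trans hM, hmax, span_eq_top_iff_forall_exists_smul_mem.2 fun x ↦ ?_⟩
  obtain ⟨d, hd, hdx⟩ := span_eq_top_iff_forall_exists_smul_mem.1 hspan x
  exact ⟨c * d, mul_ne_zero hc hd, mul_smul c d x ▸ hM (Submodule.mem_sup_right ⟨_, hdx, rfl⟩)⟩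

end MaximalIntegral

section Anisotropic

theorem exists_quadratic_root_of_henselian {R : Type*} [CommRing R] [HenselianLocalRing R]
    {a : R} (ha : a ∈ IsLocalRing.maximalIdeal R) (c : R) :
    ∃ t : R, a * t ^ 2 + t + c = 0 := by
  -- Substituting `t = c / w` turns the equation into the monic `w² + w + a c = 0`, which has the
  -- simple root `-1` modulo the maximal ideal.
  let f : Polynomial R := .X ^ 2 + .X + .C (a * c)
  have monic : f.Monic := by unfold f; monicity!
  have hroot : f.eval (-1) ∈ IsLocalRing.maximalIdeal R := by
    simpa [f] using Ideal.mul_mem_right c _ ha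
  have hsimple : IsUnit (f.derivative.eval (-1)) := by
    have hderiv : f.derivative.eval (-1) = -1 := by
      simp only [f, Polynomial.derivative_add, Polynomial.derivative_X_pow,
        Polynomial.derivative_X, Polynomial.derivative_C, Polynomial.eval_add,
        Polynomial.eval_mul, Polynomial.eval_pow, Polynomial.eval_X, Polynomial.eval_C,
        Polynomial.eval_one, Polynomial.eval_zero]
      norm_num
    rw [hderiv]
    exact isUnit_one.neg
  obtain ⟨w, hw, hw1⟩ := HenselianLocalRing.is_henselian f monic (-1) hroot hsimple
  have hwa : w ^ 2 + w + a * c = 0 := by simpa [f] using hw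
  obtain ⟨u, rfl⟩ : IsUnit w := by
    by_contra hunit
    refine (IsLocalRing.mem_maximalIdeal (1 : R)).1 ?_ isUnit_one
    simpa using Ideal.sub_mem _ hw1 ((IsLocalRing.mem_maximalIdeal w).2 hunit)
  refine ⟨c * ↑u⁻¹, ?_⟩
  have hu : (u : R) * ↑u⁻¹ = 1 := u.mul_inv
  linear_combination (c * (↑u⁻¹ : R) ^ 2) * hwa - (c * u * (↑u⁻¹ : R) + c + c * (↑u⁻¹ : R)) * hu

variable {K V : Type} [Field K] {O : Subring K} [AddCommGroup V] [Module K V]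
  {Q : QuadraticForm K V} [IsFractionRing O K] [ValuationRing O]

theorem exists_mem_maximalIdeal_coe_eq_inv {x : K} (hx : x ∉ O) :
    ∃ y ∈ IsLocalRing.maximalIdeal O, (y : K) = x⁻¹ := by
  obtain ⟨y, rfl⟩ | ⟨y, hy⟩ := ValuationRing.isInteger_or_isInteger O x
  · exact absurd y.2 hx
  refine ⟨y, fun hunit ↦ hx ?_, hy⟩
  obtain ⟨z, hz⟩ := hunit.exists_right_inv
  have hz' : x⁻¹ * (z : K) = 1 := by
    rw [← hy]
    exact congrArg Subtype.val hz
  rw [← inv_inv x, ← eq_inv_of_mul_eq_one_right hz']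
  exact z.2

variable [HenselianLocalRing O]

theorem polar_mem_of_anisotropic (hQ : Q.Anisotropic) {x y : V} (hx : Q x ∈ O) (hy : Q y ∈ O) :
    polar Q x y ∈ O := by
  -- Otherwise the form `Q (t • x + y)` in `t` is `polar Q x y` times a polynomial that has a root
  -- by Hensel's lemma, so that `y` is a multiple of `x`.
  by_contra hB
  obtain ⟨b, hb, hbinv⟩ := exists_mem_maximalIdeal_coe_eq_inv hB
  have hB0 : polar Q x y ≠ 0 := fun h ↦ hB (h ▸ O.zero_mem)
  obtain ⟨t, ht⟩ := exists_quadratic_root_of_henselian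
    (Ideal.mul_mem_left _ ⟨Q x, hx⟩ hb) (⟨Q y, hy⟩ * b)
  have ht' : Q x * (b : K) * (t : K) ^ 2 + t + Q y * (b : K) = 0 := congrArg Subtype.val ht
  have hzero : (t : K) • x + y = 0 := by
    refine hQ _ ?_
    rw [QuadraticMap.map_add Q, QuadraticMap.map_smul, polar_smul_left, smul_eq_mul]
    rw [hbinv] at ht'
    field_simp at ht'
    linear_combination ht'
  have hBt : polar Q x y = -(t : K) * (2 * Q x) := by
    rw [eq_neg_of_add_eq_zero_right hzero, polar_neg_right, polar_smul_right, polar_self]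
    simp
  exact hB (hBt ▸ O.mul_mem (O.neg_mem t.2) (O.mul_mem (ofNat_mem O 2) hx))

theorem IsMaximalIntegral.mem_iff_of_anisotropic (hQ : Q.Anisotropic) {L : Submodule O V}
    (hL : IsMaximalIntegral Q L) {x : V} : x ∈ L ↔ Q x ∈ O :=
  ⟨hL.prop x, fun hx ↦ hL.mem_of_polar_mem hx fun y hy ↦
    polar_mem_of_anisotropic hQ hx (hL.prop y hy)⟩

end Anisotropic

section HyperbolicSplitting

variable {K V : Type} [Field K] {O : Subring K} [AddCommGroup V] [Module K V]
  {Q : QuadraticForm K V} {L : Submodule O V}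

theorem IsMaximalIntegral.exists_polar_eq_one [IsFractionRing O K] [IsPrincipalIdealRing O]
    (hQ : Nondeg Q) (hL : IsMaximalIntegral Q L) (hspan : Submodule.span K (L : Set V) = ⊤)
    {z : V} (hz : z ≠ 0) (hQz : Q z = 0) : ∃ e ∈ L, ∃ y ∈ L, Q e = 0 ∧ polar Q e y = 1 := by
  obtain ⟨c, hc, hcz⟩ := span_eq_top_iff_forall_exists_smul_mem.1 hspan z
  let polarMap : V →ₗ[O] K := (Q.polarBilin (c • z)).restrictScalars O
  obtain ⟨u, hu⟩ := IsPrincipalIdealRing.principal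
    ((L.map polarMap).comap (Algebra.linearMap O K))
  have mem_iff (b : O) : u ∣ b ↔ ∃ y ∈ L, polar Q (c • z) y = b := by
    rw [← Ideal.mem_span_singleton, ← Ideal.submodule_span_eq, ← hu]
    rfl
  obtain ⟨y, hy, hyu⟩ := (mem_iff u).1 dvd_rfl
  have hu0 : (u : K) ≠ 0 := by
    intro h0
    refine hz (hQ z fun x ↦ ?_)
    obtain ⟨d, hd, hdx⟩ := span_eq_top_iff_forall_exists_smul_mem.1 hspan x
    obtain ⟨b, hb⟩ := (mem_iff ⟨_, hL.prop.polar_mem hcz hdx⟩).2 ⟨_, hdx, rfl⟩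
    have hzero : polar Q (c • z) (d • x) = 0 := by
      rw [show polar Q (c • z) (d • x) = u * b from congrArg Subtype.val hb, h0, zero_mul]
    rw [QuadraticMap.polar_smul_left_of_tower, QuadraticMap.polar_smul_right_of_tower] at hzero
    simpa [hc, hd] using hzero
  have hQe : Q ((u : K)⁻¹ • c • z) = 0 := by
    rw [QuadraticMap.map_smul, QuadraticMap.map_smul_of_tower, hQz, smul_zero, smul_zero]
  refine ⟨(u : K)⁻¹ • c • z, hL.mem_of_polar_mem (hQe ▸ O.zero_mem) fun x hx ↦ ?_, y, hy, hQe, ?_⟩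
  · obtain ⟨b, hb⟩ := (mem_iff ⟨_, hL.prop.polar_mem hcz hx⟩).2 ⟨_, hx, rfl⟩
    rw [polar_smul_left, show polar Q (c • z) x = u * b from congrArg Subtype.val hb,
      smul_eq_mul, inv_mul_cancel_left₀ hu0]
    exact b.2
  · rw [polar_smul_left, hyu, smul_eq_mul, inv_mul_cancel₀ hu0]

theorem IsMaximalIntegral.exists_isHyperbolicPair [IsFractionRing O K] [IsPrincipalIdealRing O]
    (hQ : Nondeg Q) (hL : IsMaximalIntegral Q L) (hspan : Submodule.span K (L : Set V) = ⊤)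
    {z : V} (hz : z ≠ 0) (hQz : Q z = 0) : ∃ e ∈ L, ∃ f ∈ L, IsHyperbolicPair Q e f := by
  obtain ⟨e, he, y, hy, hQe, hey⟩ := hL.exists_polar_eq_one hQ hspan hz hQz
  refine ⟨e, he, y - Q y • e, L.sub_mem hy (L.smul_mem ⟨Q y, hL.prop y hy⟩ he), hQe, ?_, ?_⟩
  · rw [sub_eq_add_neg, ← neg_smul, QuadraticMap.map_add Q, QuadraticMap.map_smul, hQe,
      polar_smul_right, polar_comm, hey]
    simp
  · rw [polar_sub_right, hey, polar_smul_right, polar_self, hQe]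
    simp

namespace IsHyperbolicPair

/-- The orthogonal complement of a hyperbolic plane spanned by `e` and `f`. -/
def complement (Q : QuadraticForm K V) (e f : V) : Submodule K V :=
  (Q.polarBilin e).ker ⊓ (Q.polarBilin f).ker

variable {e f : V}

theorem polar_left_complement (x : complement Q e f) : polar Q e x = 0 :=
  x.2.1

theorem polar_right_complement (x : complement Q e f) : polar Q f x = 0 :=
  x.2.2

theorem complement_ne_top (h : IsHyperbolicPair Q e f) : complement Q e f ≠ ⊤ :=
  fun htop ↦ one_ne_zero <|
    h.polar_eq_one.symm.trans (htop ▸ Submodule.mem_top : f ∈ complement Q e f).1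

/-- The orthogonal projection of the whole space onto the complement of a hyperbolic plane. -/
def proj (h : IsHyperbolicPair Q e f) : V →ₗ[K] complement Q e f :=
  LinearMap.codRestrict _
    (.id - (Q.polarBilin f).smulRight e - (Q.polarBilin e).smulRight f) fun x ↦ by
      have hfe : polar Q f e = 1 := by rw [polar_comm, h.polar_eq_one]
      constructor <;>
        simp [polar_self, polar_sub_right, h.left_isotropic, h.right_isotropic, h.polar_eq_one,
          hfe]

theorem coe_proj (h : IsHyperbolicPair Q e f) (x : V) :
    (h.proj x : V) = x - polar Q f x • e - polar Q e x • f :=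
  rfl

theorem smul_add_smul_add_proj (h : IsHyperbolicPair Q e f) (x : V) :
    polar Q f x • e + polar Q e x • f + h.proj x = x := by
  rw [coe_proj]
  abel

theorem map_smul_add_smul_add (h : IsHyperbolicPair Q e f) (a b : K) (y : complement Q e f) :
    Q (a • e + b • f + y) = a * b + Q y := by
  rw [QuadraticMap.map_add Q, h.map_smul_add_smul, polar_add_left, polar_smul_left,
    polar_smul_left, polar_left_complement, polar_right_complement]
  simp

theorem polar_coe_proj (h : IsHyperbolicPair Q e f) (y : complement Q e f) (x : V) :
    polar Q y (h.proj x) = polar Q y x := by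
  rw [coe_proj, polar_sub_right, polar_sub_right, polar_smul_right, polar_smul_right,
    polar_comm Q y e, polar_comm Q y f, polar_left_complement, polar_right_complement]
  simp

theorem nondeg_complement (h : IsHyperbolicPair Q e f) (hQ : Nondeg Q) :
    Nondeg (Q.comp (complement Q e f).subtype) := fun y hy ↦
  Subtype.ext <| hQ y fun x ↦ (h.polar_coe_proj y x).symm.trans (hy (h.proj x))

/-- An isometry of the complement of a hyperbolic plane, extended by the identity on the plane. -/
def extend (h : IsHyperbolicPair Q e f)
    (ρ : Q.comp (complement Q e f).subtype →qᵢ Q.comp (complement Q e f).subtype) : Q →qᵢ Q where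
  toLinearMap := (Q.polarBilin f).smulRight e + (Q.polarBilin e).smulRight f +
    (complement Q e f).subtype ∘ₗ ρ.toLinearMap ∘ₗ h.proj
  map_app' x :=
    calc Q (polar Q f x • e + polar Q e x • f + ρ (h.proj x))
      _ = polar Q f x * polar Q e x + Q (h.proj x) := by
        rw [h.map_smul_add_smul_add]
        exact congrArg _ (ρ.map_app (h.proj x))
      _ = Q x := by rw [← h.map_smul_add_smul_add, h.smul_add_smul_add_proj]

theorem smul_add_smul_add_mem_iff (hL : IsIntegral O Q L) (he : e ∈ L) (hf : f ∈ L) {x y : V}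
    (hx : x ∈ L) : polar Q f x • e + polar Q e x • f + y ∈ L ↔ y ∈ L := by
  refine L.add_mem_iff_right (L.add_mem ?_ ?_)
  · exact L.smul_mem ⟨_, hL.polar_mem hf hx⟩ he
  · exact L.smul_mem ⟨_, hL.polar_mem he hx⟩ hf

theorem proj_mem (h : IsHyperbolicPair Q e f) (hL : IsIntegral O Q L) (he : e ∈ L)
    (hf : f ∈ L) {x : V} (hx : x ∈ L) : (h.proj x : V) ∈ L := by
  rwa [← smul_add_smul_add_mem_iff hL he hf hx, h.smul_add_smul_add_proj]

theorem isMaximalIntegral_comap (h : IsHyperbolicPair Q e f) (hL : IsMaximalIntegral Q L)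
    (he : e ∈ L) (hf : f ∈ L) :
    IsMaximalIntegral (Q.comp (complement Q e f).subtype)
      (L.comap ((complement Q e f).subtype.restrictScalars O)) := by
  refine ⟨fun y hy ↦ hL.prop _ hy, fun M hM hLM y hy ↦ hL.mem_of_polar_mem (hM y hy) ?_⟩
  intro x hx
  change polar Q y x ∈ O
  rw [← h.polar_coe_proj]
  exact hM.polar_mem hy (hLM (h.proj_mem hL.prop he hf hx))

end IsHyperbolicPair

end HyperbolicSplitting

section Uniqueness

variable {K V : Type} [Field K] {O : Subring K} [AddCommGroup V] [Module K V]
  [FiniteDimensional K V] {Q : QuadraticForm K V} [IsFractionRing O K] [IsPrincipalIdealRing O]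
  [HenselianLocalRing O]

theorem IsMaximalIntegral.exists_isometry_mem (h2 : (2 : K) ≠ 0) (hQ : Nondeg Q)
    {L M : Submodule O V} (hL : IsMaximalIntegral Q L) (hM : IsMaximalIntegral Q M)
    (hLspan : Submodule.span K (L : Set V) = ⊤) (hMspan : Submodule.span K (M : Set V) = ⊤) :
    ∃ ρ : Q →qᵢ Q, ∀ x ∈ L, ρ x ∈ M := by
  have : ValuationRing O := ValuationRing.iff_local_bezout_domain.2 ⟨inferInstance, inferInstance⟩
  induction hn : Module.finrank K V using Nat.strong_induction_on generalizing V with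
  | _ n ih =>
  by_cases hani : Q.Anisotropic
  · exact ⟨.id Q, fun x hx ↦ (hM.mem_iff_of_anisotropic hani).2 (hL.prop x hx)⟩
  obtain ⟨z, hz, hz0⟩ : ∃ z, Q z = 0 ∧ z ≠ 0 := by
    simpa [QuadraticMap.Anisotropic] using hani
  obtain ⟨e, heL, f, hfL, hef⟩ := hL.exists_isHyperbolicPair hQ hLspan hz0 hz
  obtain ⟨e', heM, f', hfM, hef'⟩ := hM.exists_isHyperbolicPair hQ hMspan hz0 hz
  obtain ⟨g, rfl, rfl⟩ := hef.exists_isometryEquiv h2 hef'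
  obtain ⟨ρ, hρ⟩ := ih _ (hn ▸ Submodule.finrank_lt hef.complement_ne_top)
    (hef.nondeg_complement hQ) (hef.isMaximalIntegral_comap hL heL hfL)
    (hef.isMaximalIntegral_comap (hM.comap g) heM hfM) (span_comap_eq_top hLspan _)
    (span_comap_eq_top (span_comap_eq_top hMspan _) _) rfl
  refine ⟨g.toIsometry.comp (hef.extend ρ), fun x hx ↦ ?_⟩
  have hproj : g (ρ (hef.proj x)) ∈ M := hρ _ (hef.proj_mem hL.prop heL hfL hx)
  change g (polar Q f x • e + polar Q e x • f + ρ (hef.proj x)) ∈ M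
  rw [map_add, map_add, map_smul, map_smul]
  refine M.add_mem (M.add_mem ?_ ?_) hproj
  · exact M.smul_mem ⟨_, hL.prop.polar_mem hfL hx⟩ heM
  · exact M.smul_mem ⟨_, hL.prop.polar_mem heL hx⟩ hfM

theorem IsMaximalIntegral.exists_isometry_mem_of_fg {W : Type} [AddCommGroup W] [Module K W]
    {Q' : QuadraticForm K W} (h2 : (2 : K) ≠ 0) (hQ : Nondeg Q) {L : Submodule O V}
    (hL : IsMaximalIntegral Q L) (hspan : Submodule.span K (L : Set V) = ⊤) {N : Submodule O W}
    (hN : IsIntegral O Q' N) (hfg : N.FG) (σ : Q' →qᵢ Q) :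
    ∃ τ : Q' →qᵢ Q, ∀ x ∈ N, τ x ∈ L := by
  have hmap : IsIntegral O Q (N.map (σ.toLinearMap.restrictScalars O)) := by
    rintro _ ⟨y, hy, rfl⟩
    exact (σ.map_app y).symm ▸ hN y hy
  obtain ⟨M, hNM, hM, hMspan⟩ :=
    hmap.exists_isMaximalIntegral_ge_of_fg (hfg.map _) hL.prop hspan
  obtain ⟨ρ, hρ⟩ := hM.exists_isometry_mem h2 hQ hL hMspan hspan
  exact ⟨ρ.comp σ, fun x hx ↦ hρ _ (hNM ⟨x, hx, rfl⟩)⟩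

end Uniqueness

section CompleteDiscreteValuationRing

variable {K Γ₀ : Type*} [Field K] [LinearOrderedCommGroupWithZero Γ₀] [MulArchimedean Γ₀]
  [Valued K Γ₀] [IsDiscreteValuationRing (Valued.v (R := K)).valuationSubring]

theorem isAdic_maximalIdeal_of_isDiscreteValuationRing :
    IsAdic (IsLocalRing.maximalIdeal (Valued.v (R := K)).valuationSubring) := by
  let O := (Valued.v (R := K)).valuationSubring
  have hO : Valued.v.Integers O := Valuation.valuationSubring.integers Valued.v
  have : IsTopologicalRing O := inferInstanceAs (IsTopologicalRing O.toSubring)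
  obtain ⟨ϖ, hϖ⟩ := IsDiscreteValuationRing.exists_irreducible O
  have hϖ0 : (ϖ : K) ≠ 0 := by simpa using hϖ.ne_zero
  have hmem (n : ℕ) (x : O) : x ∈ IsLocalRing.maximalIdeal O ^ n ↔
      Valued.v (x : K) ≤ Valued.v (ϖ : K) ^ n := by
    rw [hϖ.maximalIdeal_eq, Ideal.span_singleton_pow, Ideal.mem_span_singleton,
      hO.dvd_iff_le, ← map_pow]
    rfl
  refine isAdic_iff.2 ⟨fun n ↦ ?_, fun s hs ↦ ?_⟩
  · have hball : IsOpen {x : K | Valued.v x ≤ Valued.v ((ϖ : K) ^ n)} := by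
      simpa only [Valuation.restrict_le_iff] using
        Valued.isOpen_closedBall K (r := Valued.v.restrict ((ϖ : K) ^ n)) (by simp [hϖ0])
    convert hball.preimage (continuous_subtype_val (p := (· ∈ O))) using 1
    ext x
    exact (hmem n x).trans (by rw [← map_pow]; rfl)
  · obtain ⟨t, ht, hts⟩ := mem_nhds_subtype _ _ _ |>.1 hs
    obtain ⟨γ, hγ⟩ := Valued.mem_nhds_zero.1 ht
    obtain ⟨n, hn⟩ := exists_pow_lt₀ (hO.valuation_irreducible_lt_one hϖ)
      (Units.mk0 (MonoidWithZeroHom.ValueGroup₀.embedding γ.val) (by simp))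
    refine ⟨n, fun x hx ↦ hts (hγ ?_)⟩
    exact (Valuation.restrict_lt_iff_lt_embedding _).2 (((hmem n x).1 hx).trans_lt hn)

variable (K) in
theorem henselianLocalRing_of_isDiscreteValuationRing [CompleteSpace K] :
    HenselianLocalRing (Valued.v (R := K)).valuationSubring := by
  let O := (Valued.v (R := K)).valuationSubring
  let I := IsLocalRing.maximalIdeal O
  have : IsUniformAddGroup O := inferInstanceAs (IsUniformAddGroup O.toSubring.toAddSubgroup)
  have : CompleteSpace O := (Valued.isClosed_valuationSubring K).completeSpace_coe
  have : IsAdicComplete I O :=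
    isAdic_maximalIdeal_of_isDiscreteValuationRing.isAdicComplete_iff.2 ⟨this, inferInstance⟩
  exact ⟨fun f hf a h₁ h₂ ↦ HenselianRing.is_henselian (I := I) f hf a h₁ (h₂.map _)⟩

end CompleteDiscreteValuationRing

section CompletionInstances

variable (F : Type) [Field F] [NumberField F]
  (v : HeightOneSpectrum (NumberField.RingOfIntegers F))

instance : IsDiscreteValuationRing (Ov F v) :=
  inferInstanceAs (IsDiscreteValuationRing (v.adicCompletionIntegers F))

instance : IsFractionRing (Ov F v) (Fv F v) :=
  inferInstanceAs (IsFractionRing (v.adicCompletionIntegers F) (v.adicCompletion F))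

instance : HenselianLocalRing (Ov F v) :=
  have : IsDiscreteValuationRing (Valued.v (R := v.adicCompletion F)).valuationSubring :=
    inferInstanceAs (IsDiscreteValuationRing (v.adicCompletionIntegers F))
  henselianLocalRing_of_isDiscreteValuationRing (v.adicCompletion F)

end CompletionInstances

section StrongApproximation

variable {R K : Type*} [CommRing R] [IsDedekindDomain R] [Field K] [Algebra R K]
  [IsFractionRing R K]

theorem exists_valuation_sub_le_one_and_forall_ne (v : HeightOneSpectrum R) (b : K) :
    ∃ c : K, v.valuation K (c - b) ≤ 1 ∧ ∀ w ≠ v, w.valuation K c ≤ 1 := by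
  classical
  have hexp (w : HeightOneSpectrum R) : ∃ n : ℕ, w.valuation K b ≤ WithZero.exp (n : ℤ) := by
    refine ⟨(WithZero.log (w.valuation K b)).toNat, ?_⟩
    exact WithZero.le_exp_of_log_le (Int.self_le_toNat _)
  choose e he using hexp
  let poles := (HeightOneSpectrum.Support.finite R b).toFinset
  obtain ⟨t, ht⟩ := IsDedekindDomain.exists_forall_sub_mem_ideal (s := insert v poles)
    HeightOneSpectrum.asIdeal e (fun w _ ↦ w.prime)
    (fun w _ w' _ h ↦ mt HeightOneSpectrum.ext h) (fun w ↦ if w.1 = v then 1 else 0)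
  have hmul {w : HeightOneSpectrum R} {x : R} (hx : x ∈ w.asIdeal ^ e w) :
      w.valuation K (b * algebraMap R K x) ≤ 1 := by
    rw [← w.intValuation_le_pow_iff_mem, ← w.valuation_of_algebraMap (K := K)] at hx
    rw [map_mul]
    exact (mul_le_mul' (he w) hx).trans_eq (by rw [← WithZero.exp_add]; simp)
  refine ⟨b * algebraMap R K t, ?_, fun w hw ↦ ?_⟩
  · simpa [mul_sub] using hmul (ht v (Finset.mem_insert_self _ _))
  · by_cases hpole : w ∈ poles
    · simpa [hw] using hmul (ht w (Finset.mem_insert_of_mem hpole))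
    · rw [map_mul]
      have hb : w.valuation K b ≤ 1 := by
        simpa [poles, HeightOneSpectrum.Support] using hpole
      exact mul_le_one' hb (w.valuation_le_one t)

theorem exists_sub_mem_adicCompletionIntegers_and_forall_ne (v : HeightOneSpectrum R)
    (a : v.adicCompletion K) :
    ∃ c : K, algebraMap K (v.adicCompletion K) c - a ∈ v.adicCompletionIntegers K ∧
      ∀ w ≠ v, w.valuation K c ≤ 1 := by
  have hopen : IsOpen {x | x - a ∈ v.adicCompletionIntegers K} :=
    (Valued.isOpen_valuationSubring _).preimage (continuous_sub_right a)
  obtain ⟨b, hb⟩ := (HeightOneSpectrum.denseRange_algebraMap (K := K) v).exists_mem_open hopen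
    ⟨a, by simp⟩
  obtain ⟨c, hcb, hc⟩ := exists_valuation_sub_le_one_and_forall_ne v b
  refine ⟨c, ?_, hc⟩
  have hcb' : algebraMap K (v.adicCompletion K) (c - b) ∈ v.adicCompletionIntegers K :=
    (v.mem_adicCompletionIntegers R K).2
      ((v.valuedAdicCompletion_eq_valuation' (c - b)).trans_le hcb)
  simpa only [map_sub, sub_add_sub_cancel] using add_mem hcb' hb

end StrongApproximation

section DualBasis

variable {R K V : Type*} [CommRing R] [Field K] [Algebra R K] [IsFractionRing R K]
  [AddCommGroup V] [Module K V] [Module R V] [IsScalarTower R K V]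

theorem isLocalizedModule_subtype [IsDomain R] {L : Submodule R V}
    (hL : Submodule.span K (L : Set V) = ⊤) :
    IsLocalizedModule (nonZeroDivisors R) L.subtype where
  map_units c := by
    have hc : algebraMap R K c ≠ 0 := by simp
    refine (Module.End.isUnit_iff _).2 ⟨fun x y hxy ↦ ?_, fun x ↦ ⟨(algebraMap R K c)⁻¹ • x, ?_⟩⟩
    · simp only [Module.algebraMap_end_apply] at hxy
      exact smul_right_injective V hc (by simpa only [algebraMap_smul] using hxy)
    · simp only [Module.algebraMap_end_apply]
      rw [← algebraMap_smul K (c : R), smul_inv_smul₀ hc]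
  surj x := by
    obtain ⟨c, hc, hcx⟩ := span_eq_top_iff_forall_exists_smul_mem.1 hL x
    exact ⟨(⟨c • x, hcx⟩, ⟨c, mem_nonZeroDivisors_of_ne_zero hc⟩), rfl⟩
  exists_of_eq h := ⟨1, by rw [Subtype.ext h]⟩

theorem exists_dual_extending [IsDomain R] {L : Submodule R V}
    (hL : Submodule.span K (L : Set V) = ⊤) (ψ : L →ₗ[R] R) :
    ∃ φ : V →ₗ[K] K, ∀ x : L, φ x = algebraMap R K (ψ x) := by
  have := isLocalizedModule_subtype hL
  let φ := IsLocalizedModule.map (nonZeroDivisors R) L.subtype (Algebra.linearMap R K) ψ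
  exact ⟨φ.extendScalarsOfIsLocalization (nonZeroDivisors R) K,
    fun x ↦ IsLocalizedModule.map_apply _ L.subtype (Algebra.linearMap R K) ψ x⟩

theorem exists_dual_basis_of_isLattice [IsDedekindDomain R] (L : Submodule R V) [L.IsLattice K] :
    ∃ (n : ℕ) (e : Fin n → V) (φ : Fin n → V →ₗ[K] K), (∀ i, e i ∈ L) ∧
      (∀ i, ∀ x ∈ L, φ i x ∈ (algebraMap R K).range) ∧ ∀ x, ∑ i, φ i x • e i = x := by
  have hL := Submodule.IsLattice.span_eq_top (A := K) (M := L)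
  have : Module.IsTorsionFree R V := .trans_faithfulSMul R K V
  have : Module.Flat R L := inferInstance
  have : Module.FinitePresentation R L := Module.finitePresentation_of_finite R L
  have : Module.Projective R L := Module.Flat.projective_of_finitePresentation
  obtain ⟨n, f, g, -, -, hfg⟩ := Module.Finite.exists_comp_eq_id_of_projective R L
  choose φ hφ using fun i ↦ exists_dual_extending hL (LinearMap.proj i ∘ₗ g)
  let e (i : Fin n) : V := f (fun j ↦ if i = j then 1 else 0)
  refine ⟨n, e, φ, fun i ↦ (f _).2, fun i x hx ↦ ⟨_, (hφ i ⟨x, hx⟩).symm⟩, fun x ↦ ?_⟩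
  have hsum : ∑ i, (φ i).smulRight (e i) = LinearMap.id := LinearMap.ext_on hL fun x hx ↦ by
    have hfgx : (f (g ⟨x, hx⟩) : V) = x := congr_arg Subtype.val (LinearMap.congr_fun hfg ⟨x, hx⟩)
    rw [LinearMap.pi_apply_eq_sum_univ] at hfgx
    simpa [hφ _ ⟨x, hx⟩, e] using hfgx
  simpa using LinearMap.congr_fun hsum x

end DualBasis

section NumberField

variable {F : Type} [Field F] [NumberField F]

instance : IsFractionRing (OF F) F :=
  inferInstanceAs (IsFractionRing (NumberField.RingOfIntegers F) F)

instance : IsDedekindDomain (OF F) :=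
  inferInstanceAs (IsDedekindDomain (NumberField.RingOfIntegers F))

theorem algebraMap_mem_Ov_iff {v : HeightOneSpectrum (NumberField.RingOfIntegers F)} {x : F} :
    algebraMap F (Fv F v) x ∈ Ov F v ↔ v.valuation F x ≤ 1 := by
  rw [← v.valuedAdicCompletion_eq_valuation']
  exact v.mem_adicCompletionIntegers _ _

theorem mem_OF_iff_forall_algebraMap_mem_Ov {x : F} :
    x ∈ OF F ↔ ∀ v, algebraMap F (Fv F v) x ∈ Ov F v := by
  simp only [algebraMap_mem_Ov_iff]
  refine ⟨fun hx v ↦ v.valuation_le_one (⟨x, hx⟩ : NumberField.RingOfIntegers F), fun hx ↦ ?_⟩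
  obtain ⟨y, rfl⟩ := HeightOneSpectrum.mem_integers_of_valuation_le_one F x hx
  exact y.2

theorem finite_setOf_algebraMap_notMem_Ov (x : F) :
    {v | algebraMap F (Fv F v) x ∉ Ov F v}.Finite := by
  simp only [algebraMap_mem_Ov_iff, not_le]
  exact HeightOneSpectrum.Support.finite (NumberField.RingOfIntegers F) x

theorem exists_algebraMap_sub_mem_Ov_and_forall_ne
    (v : HeightOneSpectrum (NumberField.RingOfIntegers F)) (a : Fv F v) :
    ∃ c : F, algebraMap F (Fv F v) c - a ∈ Ov F v ∧ ∀ w ≠ v, algebraMap F (Fv F w) c ∈ Ov F w := by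
  simp only [algebraMap_mem_Ov_iff]
  exact exists_sub_mem_adicCompletionIntegers_and_forall_ne v a

variable {V W : Type} [AddCommGroup V] [Module F V] [AddCommGroup W] [Module F W]
  {Q : QuadraticForm F V} {Q' : QuadraticForm F W}

section LocalSpace

variable (v : HeightOneSpectrum (NumberField.RingOfIntegers F))

theorem toVv_add (x y : V) : toVv F v (x + y) = toVv F v x + toVv F v y :=
  TensorProduct.tmul_add ..

theorem toVv_smul (c : F) (x : V) : toVv F v (c • x) = algebraMap F (Fv F v) c • toVv F v x := by
  rw [toVv, toVv, TensorProduct.tmul_smul, algebraMap_smul]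

theorem Qv_toVv (Q : QuadraticForm F V) (x : V) :
    Qv F Q v (toVv F v x) = algebraMap F (Fv F v) (Q x) := by
  let := invertibleOfNonzero (two_ne_zero (α := F))
  exact (QuadraticForm.baseChange_tmul Q 1 x).trans
    (by rw [mul_one, Algebra.algebraMap_eq_smul_one])

theorem polar_Qv_toVv (Q : QuadraticForm F V) (x y : V) :
    polar (Qv F Q v) (toVv F v x) (toVv F v y) = algebraMap F (Fv F v) (polar Q x y) := by
  simp only [polar, ← toVv_add, Qv_toVv, map_sub]

/-- The isometry `F_v ⊗ V → F_v ⊗ W` induced by an isometry `V → W`. -/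
def localIsometry (σ : Q' →qᵢ Q) : Qv F Q' v →qᵢ Qv F Q v where
  toLinearMap := σ.toLinearMap.baseChange (Fv F v)
  map_app' x := by
    suffices h : (Qv F Q v).comp (σ.toLinearMap.baseChange (Fv F v)) = Qv F Q' v from
      congr($h x)
    refine baseChange_ext fun y ↦ ?_
    exact (Qv_toVv v Q (σ y)).trans ((congr_arg _ (σ.map_app y)).trans (Qv_toVv v Q' y).symm)

theorem localIsometry_toVv (σ : Q' →qᵢ Q) (x : W) :
    localIsometry v σ (toVv F v x) = toVv F v (σ x) :=
  LinearMap.baseChange_tmul ..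

theorem nondeg_Qv [FiniteDimensional F V] (hQ : Nondeg Q) : Nondeg (Qv F Q v) := by
  intro x hx
  let b := Module.finBasis F V
  have hB : (QuadraticMap.polarBilin Q).Nondegenerate :=
    (LinearMap.IsRefl.nondegenerate_iff_separatingLeft fun x y h ↦
      (polar_comm Q y x).trans h).2 hQ
  refine (b.baseChange (Fv F v)).forall_coord_eq_zero_iff.1 fun i ↦ ?_
  obtain ⟨y, hy⟩ := (LinearMap.BilinForm.toDual _ hB).surjective (b.coord i)
  suffices h : QuadraticMap.polarBilin (Qv F Q v) (toVv F v y) =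
      (b.baseChange (Fv F v)).coord i by
    rw [← h]
    exact (polar_comm _ _ _).trans (hx _)
  refine (b.baseChange (Fv F v)).ext fun j ↦ ?_
  have hyj : polar Q y (b j) = b.coord i (b j) := congr($hy (b j))
  rw [Module.Basis.baseChange_apply]
  refine (polar_Qv_toVv v Q y (b j)).trans ?_
  simp [hyj, Finsupp.single_apply, apply_ite]

end LocalSpace

end NumberField

section Subring

variable {K V : Type} [Field K] {O : Subring K} [AddCommGroup V] [Module K V]
  {Q : QuadraticForm K V} {S : Set V}

theorem coe_span_eq_ospan (S : Set V) : (Submodule.span O S : Set V) = ospan O S := by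
  ext x
  rw [SetLike.mem_coe, Submodule.mem_span_set']
  constructor
  · rintro ⟨n, c, g, rfl⟩
    exact ⟨n, fun i ↦ c i, fun i ↦ g i, fun i ↦ (c i).2, fun i ↦ (g i).2, rfl⟩
  · rintro ⟨n, c, g, hc, hg, rfl⟩
    exact ⟨n, fun i ↦ ⟨c i, hc i⟩, fun i ↦ ⟨g i, hg i⟩, rfl⟩

theorem isIntegral_span (hQ : ∀ x ∈ S, Q x ∈ O) (hpolar : ∀ x ∈ S, ∀ y ∈ S, polar Q x y ∈ O) :
    IsIntegral O Q (Submodule.span O S) := by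
  have hspan : ∀ x ∈ Submodule.span O S, ∀ y ∈ Submodule.span O S, polar Q x y ∈ O :=
    fun x hx y hy ↦ by
      induction hx, hy using Submodule.span_induction₂ with
      | mem_mem x y hx hy => exact hpolar x hx y hy
      | zero_left y _ => simp
      | zero_right x _ => simp
      | add_left x y z _ _ _ hx hy => exact polar_add_left Q x y z ▸ add_mem hx hy
      | add_right x y z _ _ _ hx hy => exact polar_add_right Q x y z ▸ add_mem hx hy
      | smul_left c x y _ _ h => exact polar_smul_left Q c.1 x y ▸ mul_mem c.2 h
      | smul_right c x y _ _ h => exact polar_smul_right Q c.1 x y ▸ mul_mem c.2 h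
  intro x hx
  induction hx using Submodule.span_induction with
  | mem x hx => exact hQ x hx
  | zero => simp
  | add x y hx hy hQx hQy =>
    exact QuadraticMap.map_add Q x y ▸ add_mem (add_mem hQx hQy) (hspan x hx y hy)
  | smul c x _ hQx =>
    exact QuadraticMap.map_smul Q c.1 x ▸ mul_mem (mul_mem c.2 c.2) hQx

end Subring

section NumberField

variable {F : Type} [Field F] [NumberField F]
  {V : Type} [AddCommGroup V] [Module F V] {Q : QuadraticForm F V}

section Completion

variable (v : HeightOneSpectrum (NumberField.RingOfIntegers F)) {L : Submodule (OF F) V}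

/-- The completion `L_v` of an `O_F`-submodule `L` of `V`, as an `O_{F_v}`-submodule of `V_v`;
its underlying set is `QGlob.Lv`. -/
def completionAt (L : Submodule (OF F) V) : Submodule (Ov F v) (Vv F V v) :=
  Submodule.span (Ov F v) (toVv F v '' L)

theorem toVv_mem_completionAt {x : V} (hx : x ∈ L) : toVv F v x ∈ completionAt v L :=
  Submodule.subset_span (Set.mem_image_of_mem _ hx)

variable {v} in
theorem completionAt_le {M : Submodule (Ov F v) (Vv F V v)} :
    completionAt v L ≤ M ↔ ∀ x ∈ L, toVv F v x ∈ M := by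
  rw [completionAt, Submodule.span_le, Set.image_subset_iff]
  rfl

theorem algebraMap_mem_Ov (c : OF F) : algebraMap F (Fv F v) c ∈ Ov F v :=
  mem_OF_iff_forall_algebraMap_mem_Ov.1 c.2 v

theorem smul_toVv_mem {M : Submodule (Ov F v) (Vv F V v)} (c : OF F) {x : V}
    (hx : toVv F v x ∈ M) : toVv F v (c • x) ∈ M := by
  rw [Subring.smul_def, toVv_smul]
  exact M.smul_mem ⟨_, algebraMap_mem_Ov v c⟩ hx

theorem completionAt_span (S : Set V) :
    completionAt v (Submodule.span (OF F) S) = Submodule.span (Ov F v) (toVv F v '' S) := by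
  refine le_antisymm (completionAt_le.2 fun x hx ↦ ?_) (Submodule.span_mono ?_)
  · induction hx using Submodule.span_induction with
    | mem x hx => exact Submodule.subset_span (Set.mem_image_of_mem _ hx)
    | zero => simp [toVv]
    | add x y _ _ hx hy => exact toVv_add v x y ▸ add_mem hx hy
    | smul c x _ hx => exact smul_toVv_mem v c hx
  · exact Set.image_mono Submodule.subset_span

theorem completionAt_fg (hL : L.FG) : (completionAt v L).FG := by
  classical
  obtain ⟨t, rfl⟩ := hL
  exact ⟨t.image (toVv F v), by rw [completionAt_span, Finset.coe_image]⟩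

theorem span_completionAt (hL : Submodule.span F (L : Set V) = ⊤) :
    Submodule.span (Fv F v) (completionAt v L : Set (Vv F V v)) = ⊤ := by
  have h := Submodule.baseChange_span (R := F) (Fv F v) (L : Set V)
  rw [hL, Submodule.baseChange_top] at h
  exact top_unique (h.le.trans (Submodule.span_mono Submodule.subset_span))

theorem QLat.IsIntegral.completion (hL : IsIntegral (OF F) Q L) :
    IsIntegral (Ov F v) (Qv F Q v) (completionAt v L) := by
  refine isIntegral_span ?_ ?_
  · rintro _ ⟨x, hx, rfl⟩
    exact Qv_toVv v Q x ▸ algebraMap_mem_Ov v ⟨_, hL x hx⟩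
  · rintro _ ⟨x, hx, rfl⟩ _ ⟨y, hy, rfl⟩
    exact polar_Qv_toVv v Q x y ▸ algebraMap_mem_Ov v ⟨_, hL.polar_mem hx hy⟩

theorem coe_completionAt : (completionAt v L : Set (Vv F V v)) = Lv F L v :=
  coe_span_eq_ospan _

end Completion

end NumberField

section LocalGlobal

variable {F : Type} [Field F] [NumberField F] {V : Type} [AddCommGroup V] [Module F V]
  {L N : Submodule (OF F) V}

theorem baseChange_mem_Ov {v : HeightOneSpectrum (NumberField.RingOfIntegers F)}
    (φ : Module.Dual F V) (hφ : ∀ x ∈ L, φ x ∈ OF F) {z : Vv F V v}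
    (hz : z ∈ completionAt v L) : φ.baseChange (Fv F v) z ∈ Ov F v := by
  induction hz using Submodule.span_induction with
  | mem z hz =>
    obtain ⟨x, hx, rfl⟩ := hz
    rw [toVv, Module.Dual.baseChange_apply_tmul, ← Algebra.algebraMap_eq_smul_one]
    exact algebraMap_mem_Ov v ⟨_, hφ x hx⟩
  | zero => simp
  | add y z _ _ hy hz => exact map_add (φ.baseChange (Fv F v)) y z ▸ add_mem hy hz
  | smul c z _ hz => exact map_smul (φ.baseChange (Fv F v)) c.1 z ▸ mul_mem c.2 hz

theorem mem_iff_forall_toVv_mem_completionAt (L : Submodule (OF F) V) [L.IsLattice F] {x : V} :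
    x ∈ L ↔ ∀ v, toVv F v x ∈ completionAt v L := by
  refine ⟨fun hx v ↦ toVv_mem_completionAt v hx, fun hx ↦ ?_⟩
  obtain ⟨n, e, φ, he, hφ, hsum⟩ := exists_dual_basis_of_isLattice (K := F) L
  rw [← hsum x]
  refine sum_mem fun i _ ↦ L.smul_mem (⟨φ i x, ?_⟩ : OF F) (he i)
  refine mem_OF_iff_forall_algebraMap_mem_Ov.2 fun v ↦ ?_
  have hφL : ∀ y ∈ L, φ i y ∈ OF F := fun y hy ↦ by
    obtain ⟨c, hc⟩ := hφ i y hy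
    exact hc ▸ c.2
  have := baseChange_mem_Ov (φ i) hφL (hx v)
  rwa [toVv, Module.Dual.baseChange_apply_tmul, ← Algebra.algebraMap_eq_smul_one] at this

theorem exists_toVv_sub_mem_completionAt_and_forall_ne (hL : Submodule.span F (L : Set V) = ⊤)
    (v : HeightOneSpectrum (NumberField.RingOfIntegers F)) (z : Vv F V v) :
    ∃ y : V, toVv F v y - z ∈ completionAt v L ∧ ∀ w ≠ v, toVv F w y ∈ completionAt w L := by
  induction z using TensorProduct.induction_on with
  | zero => exact ⟨0, by simp [toVv], fun w _ ↦ by simp [toVv]⟩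
  | tmul a x =>
    obtain ⟨d, hd, hdx⟩ := span_eq_top_iff_forall_exists_smul_mem.1 hL x
    have hd' : algebraMap F (Fv F v) d ≠ 0 := by simpa using hd
    obtain ⟨c, hca, hc⟩ :=
      exists_algebraMap_sub_mem_Ov_and_forall_ne v (a / algebraMap F (Fv F v) d)
    have hax : a ⊗ₜ x = (a / algebraMap F (Fv F v) d) • toVv F v (d • x) := by
      rw [Subring.smul_def, toVv_smul, smul_smul, div_mul_cancel₀ _ hd', toVv,
        TensorProduct.smul_tmul', smul_eq_mul, mul_one]
    refine ⟨c • d • x, ?_, fun w hw ↦ ?_⟩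
    · rw [hax, toVv_smul]
      exact sub_smul (M := Vv F V v) (algebraMap F (Fv F v) c) _ (toVv F v (d • x)) ▸
        (completionAt v L).smul_mem ⟨_, hca⟩ (toVv_mem_completionAt v hdx)
    · rw [toVv_smul]
      exact (completionAt w L).smul_mem ⟨_, hc w hw⟩ (toVv_mem_completionAt w hdx)
  | add z₁ z₂ h₁ h₂ =>
    obtain ⟨y₁, hy₁, hyw₁⟩ := h₁
    obtain ⟨y₂, hy₂, hyw₂⟩ := h₂
    refine ⟨y₁ + y₂, ?_, fun w hw ↦ toVv_add w y₁ y₂ ▸ add_mem (hyw₁ w hw) (hyw₂ w hw)⟩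
    rw [toVv_add, add_sub_add_comm]
    exact add_mem hy₁ hy₂

theorem finite_setOf_not_completionAt_le (hN : N.FG) (hL : Submodule.span F (L : Set V) = ⊤) :
    {v | ¬ completionAt v N ≤ completionAt v L}.Finite := by
  obtain ⟨c, hc, hcN⟩ := exists_smul_mem_of_fg hN hL
  refine (finite_setOf_algebraMap_notMem_Ov (c : F)⁻¹).subset fun v hv hcv ↦ hv ?_
  refine completionAt_le.2 fun x hx ↦ ?_
  have hcx : x = (c : F)⁻¹ • c • x := (inv_smul_smul₀ (by simpa using hc) x).symm
  rw [hcx, toVv_smul]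
  exact (completionAt v L).smul_mem ⟨_, hcv⟩ (toVv_mem_completionAt v (hcN x hx))

end LocalGlobal

section Glue

variable {F : Type} [Field F] [NumberField F] {V : Type} [AddCommGroup V] [Module F V]
  {Q : QuadraticForm F V} {L : Submodule (OF F) V}
  {M : ∀ v, Submodule (Ov F v) (Vv F V v)}

/-- The `O_F`-submodule of `V` of the vectors that lie in the prescribed `O_{F_v}`-submodule
`M v` of `V_v` at every finite place `v`. -/
def glue (M : ∀ v, Submodule (Ov F v) (Vv F V v)) : Submodule (OF F) V where
  carrier := {x | ∀ v, toVv F v x ∈ M v}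
  zero_mem' v := by simp [toVv]
  add_mem' {x y} hx hy v := toVv_add v x y ▸ add_mem (hx v) (hy v)
  smul_mem' c _ hx v := smul_toVv_mem v c (hx v)

theorem completionAt_glue_le (v : HeightOneSpectrum (NumberField.RingOfIntegers F)) :
    completionAt v (glue M) ≤ M v :=
  completionAt_le.2 fun _ hx ↦ hx v

theorem isIntegral_glue (hM : ∀ v, IsIntegral (Ov F v) (Qv F Q v) (M v)) :
    IsIntegral (OF F) Q (glue M) := fun x hx ↦
  mem_OF_iff_forall_algebraMap_mem_Ov.2 fun v ↦ (Qv_toVv v Q x).symm ▸ hM v _ (hx v)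

theorem completionAt_glue (hM : Submodule.span F (glue M : Set V) = ⊤)
    (v : HeightOneSpectrum (NumberField.RingOfIntegers F)) : completionAt v (glue M) = M v := by
  refine (completionAt_glue_le v).antisymm fun z hz ↦ ?_
  obtain ⟨y, hyz, hy⟩ := exists_toVv_sub_mem_completionAt_and_forall_ne hM v z
  have hyM : y ∈ glue M := fun w ↦ by
    obtain rfl | hw := eq_or_ne w v
    · simpa using add_mem (completionAt_glue_le w hyz) hz
    · exact completionAt_glue_le w (hy w hw)
  simpa using sub_mem (toVv_mem_completionAt v hyM) hyz

theorem exists_algebraMap_smul_mem_of_fg {v : HeightOneSpectrum (NumberField.RingOfIntegers F)}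
    {A B : Submodule (Ov F v) (Vv F V v)} (hA : A.FG)
    (hB : Submodule.span (Fv F v) (B : Set (Vv F V v)) = ⊤) :
    ∃ b : OF F, b ≠ 0 ∧ ∀ x ∈ A, algebraMap F (Fv F v) b • x ∈ B := by
  obtain ⟨c, hc, hcA⟩ := exists_smul_mem_of_fg hA hB
  have hc' : (c : Fv F v) ≠ 0 := by simpa using hc
  obtain ⟨b, hb, hbc⟩ :=
    HeightOneSpectrum.adicCompletion.mul_nonZeroDivisor_mem_adicCompletionIntegers v (c : Fv F v)⁻¹
  refine ⟨⟨b, b.2⟩, ?_, fun x hx ↦ ?_⟩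
  · exact fun h ↦ nonZeroDivisors.ne_zero hb (Subtype.ext congr(Subtype.val $h))
  · have h : algebraMap F (Fv F v) b • x =
        ((c : Fv F v)⁻¹ * algebraMap F (Fv F v) b) • (c : Fv F v) • x := by
      rw [smul_smul, mul_right_comm, inv_mul_cancel₀ hc', one_mul]
    exact h ▸ B.smul_mem ⟨_, hbc⟩ (hcA x hx)

theorem exists_forall_algebraMap_smul_mem {A B : ∀ v, Submodule (Ov F v) (Vv F V v)}
    (hA : ∀ v, (A v).FG) (hB : ∀ v, Submodule.span (Fv F v) (B v : Set (Vv F V v)) = ⊤)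
    (hAB : {v | ¬ A v ≤ B v}.Finite) :
    ∃ c : OF F, c ≠ 0 ∧ ∀ v, ∀ x ∈ A v, algebraMap F (Fv F v) c • x ∈ B v := by
  classical
  choose b hb hbAB using fun v ↦ exists_algebraMap_smul_mem_of_fg (hA v) (hB v)
  refine ⟨∏ v ∈ hAB.toFinset, b v, Finset.prod_ne_zero_iff.2 fun v _ ↦ hb v, fun v x hx ↦ ?_⟩
  by_cases hv : A v ≤ B v
  · exact (B v).smul_mem ⟨_, algebraMap_mem_Ov v _⟩ (hv hx)
  · rw [← Finset.prod_erase_mul _ _ (hAB.mem_toFinset.2 hv), Subring.coe_mul, map_mul, mul_smul]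
    exact (B v).smul_mem ⟨_, algebraMap_mem_Ov v _⟩ (hbAB v x hx)

theorem glue_isLattice [L.IsLattice F] (hM : ∀ v, (M v).FG)
    (hspan : ∀ v, Submodule.span (Fv F v) (M v : Set (Vv F V v)) = ⊤)
    (hML : {v | M v ≠ completionAt v L}.Finite) : (glue M).IsLattice F := by
  have hLspan := Submodule.IsLattice.span_eq_top (A := F) (M := L)
  obtain ⟨c, hc, hcL⟩ := exists_forall_algebraMap_smul_mem hM (fun v ↦ span_completionAt v hLspan)
    (hML.subset fun v hv h ↦ hv h.le)
  obtain ⟨d, hd, hdM⟩ := exists_forall_algebraMap_smul_mem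
    (fun v ↦ completionAt_fg v (Submodule.IsLattice.fg (A := F) (M := L))) hspan
    (hML.subset fun v hv h ↦ hv h.ge)
  refine ⟨?_, ?_⟩
  · have : Module.IsTorsionFree (OF F) V := .trans_faithfulSMul (OF F) F V
    refine Submodule.fg_of_fg_map_injective (LinearMap.lsmul (OF F) V c)
      (smul_right_injective V hc) ((Submodule.IsLattice.fg (A := F) (M := L)).of_le ?_)
    rintro _ ⟨x, hx, rfl⟩
    refine (mem_iff_forall_toVv_mem_completionAt L).2 fun v ↦ ?_
    exact (toVv_smul v (c : F) x).symm ▸ hcL v _ (hx v)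
  · refine span_eq_top_iff_forall_exists_smul_mem.2 fun x ↦ ?_
    obtain ⟨b, hb, hbx⟩ := span_eq_top_iff_forall_exists_smul_mem.1 hLspan x
    refine ⟨d * b, mul_ne_zero hd hb, fun v ↦ ?_⟩
    rw [mul_smul, Subring.smul_def, toVv_smul]
    exact hdM v _ (toVv_mem_completionAt v hbx)

theorem IsMaximalIntegral.completion [L.IsLattice F] (hL : IsMaximalIntegral Q L)
    (v : HeightOneSpectrum (NumberField.RingOfIntegers F)) :
    IsMaximalIntegral (Qv F Q v) (completionAt v L) := by
  classical
  have hLint : IsIntegral (OF F) Q L := hL.prop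
  refine ⟨hLint.completion v, fun N hN hLN z hz ↦ ?_⟩
  obtain ⟨M, hMv, hMw⟩ : ∃ M : ∀ w, Submodule (Ov F w) (Vv F V w),
      M v = N ∧ ∀ w ≠ v, M w = completionAt w L :=
    ⟨Function.update (fun w ↦ completionAt w L) v N, Function.update_self ..,
      fun w hw ↦ Function.update_of_ne hw ..⟩
  have hLM (w) : completionAt w L ≤ M w := by
    obtain rfl | hw := eq_or_ne w v
    · exact hMv ▸ hLN
    · exact (hMw w hw).ge
  have hM (w) : IsIntegral (Ov F w) (Qv F Q w) (M w) := by
    obtain rfl | hw := eq_or_ne w v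
    · exact hMv ▸ hN
    · exact hMw w hw ▸ hLint.completion w
  obtain ⟨y, hyz, hy⟩ := exists_toVv_sub_mem_completionAt_and_forall_ne
    (Submodule.IsLattice.span_eq_top (A := F) (M := L)) v z
  have hyM : y ∈ glue M := fun w ↦ by
    obtain rfl | hw := eq_or_ne w v
    · exact sub_add_cancel (toVv F w y) z ▸ add_mem (hLM w hyz) (hMv ▸ hz)
    · exact hLM w (hy w hw)
  have hyL : y ∈ L :=
    hL.le_of_ge (isIntegral_glue hM) (fun x hx w ↦ hLM w (toVv_mem_completionAt w hx)) hyM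
  exact sub_sub_cancel (toVv F v y) z ▸ sub_mem (toVv_mem_completionAt v hyL) hyz

end Glue

section Representations

variable {K V W : Type} [Field K] {O : Subring K} [AddCommGroup V] [Module K V]
  [AddCommGroup W] [Module K W] {Q : QuadraticForm K V} {Q' : QuadraticForm K W}
  {L : Submodule O V}

theorem isLatticeOn_iff {S : Set V} :
    IsLatticeOn O S ↔ ∃ M : Submodule O V, M.IsLattice K ∧ (M : Set V) = S := by
  constructor
  · rintro ⟨⟨t, rfl⟩, hspan⟩
    exact ⟨Submodule.span O t, ⟨⟨t, rfl⟩, by rwa [coe_span_eq_ospan]⟩, coe_span_eq_ospan _⟩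
  · rintro ⟨M, ⟨⟨t, rfl⟩, hspan⟩, rfl⟩
    exact ⟨⟨t, coe_span_eq_ospan _⟩, hspan⟩

theorem isMaximalIntegral_of_isMaximal [L.IsLattice K] (hL : IsMaximal O Q L) :
    IsMaximalIntegral Q L := by
  refine ⟨hL.1, fun M hM hLM x hx ↦ ?_⟩
  let L' : Submodule O V := L ⊔ Submodule.span O {x}
  have hL'M : L' ≤ M := sup_le hLM ((Submodule.span_singleton_le_iff_mem _ _).2 hx)
  have hspan := Submodule.IsLattice.span_eq_top (A := K) (M := L)
  have hspan' : Submodule.span K (L' : Set V) = ⊤ :=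
    top_unique (hspan.ge.trans (Submodule.span_mono (SetLike.coe_subset_coe.2 le_sup_left)))
  obtain ⟨t, ht⟩ : L'.FG := Submodule.IsLattice.fg (A := K).sup (Submodule.fg_span_singleton x)
  have hL' : (L' : Set V) = L :=
    hL.2 L' ⟨t, by rw [← ht, coe_span_eq_ospan]⟩ (hspan'.trans hspan.symm)
      (SetLike.coe_subset_coe.2 le_sup_left) fun y hy ↦ hM y (hL'M hy)
  exact (SetLike.coe_injective hL').le
    (Submodule.mem_sup_right (Submodule.mem_span_singleton_self x) : x ∈ L')

theorem IsMaximalIntegral.isADC [FiniteDimensional K V] [IsFractionRing O K]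
    [IsPrincipalIdealRing O] [HenselianLocalRing O] (h2 : (2 : K) ≠ 0) (hQ : Nondeg Q)
    (hL : IsMaximalIntegral Q L) (hspan : Submodule.span K (L : Set V) = ⊤) (n : ℕ) :
    IsADC O Q L n := by
  rintro W _ _ Q' hQ' - N hN hNint ⟨σ, -, hσ⟩
  obtain ⟨N, hNlat, rfl⟩ := isLatticeOn_iff.1 hN
  obtain ⟨τ, hτ⟩ := hL.exists_isometry_mem_of_fg h2 hQ hspan hNint (Submodule.IsLattice.fg (A := K))
    (⟨σ, hσ⟩ : Q' →qᵢ Q)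
  exact ⟨τ.toLinearMap, injective_of_isometry hQ' τ, τ.map_app, Set.image_subset_iff.2 hτ⟩

theorem QLat.IsADC.exists_isometryEquiv_mem [FiniteDimensional K W] {n : ℕ} (h2 : (2 : K) ≠ 0)
    (hL : IsADC O Q L n) (hQ' : Nondeg Q') (hn : Module.finrank K W = n) {N : Set W}
    (hNlat : IsLatticeOn O N) (hN : IsIntegral O Q' N) (σ : Q' →qᵢ Q) :
    ∃ g : Q.IsometryEquiv Q, ∀ x ∈ N, g (σ x) ∈ L := by
  obtain ⟨τ, -, hτ, hτN⟩ := hL W Q' hQ' hn N hNlat hN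
    ⟨σ.toLinearMap, injective_of_isometry hQ' σ, σ.map_app⟩
  obtain ⟨g, hg⟩ := exists_isometryEquiv_comp_eq h2 hQ' σ ⟨τ, hτ⟩
  exact ⟨g, fun x hx ↦ hg x ▸ hτN ⟨x, hx, rfl⟩⟩

end Representations

section Main

variable {F : Type} [Field F] [NumberField F] {V W : Type} [AddCommGroup V] [Module F V]
  [AddCommGroup W] [Module F W] {Q : QuadraticForm F V} {Q' : QuadraticForm F W}
  {L : Submodule (OF F) V} [L.IsLattice F]

instance completionAt_isLattice (v : HeightOneSpectrum (NumberField.RingOfIntegers F)) :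
    (completionAt v L).IsLattice (Fv F v) where
  fg := completionAt_fg v (Submodule.IsLattice.fg (A := F))
  span_eq_top := span_completionAt v (Submodule.IsLattice.span_eq_top (A := F))

theorem isLatticeOn_completionAt (v : HeightOneSpectrum (NumberField.RingOfIntegers F))
    (L : Submodule (OF F) V) [L.IsLattice F] :
    IsLatticeOn (Ov F v) (completionAt v L : Set (Vv F V v)) :=
  isLatticeOn_iff.2 ⟨completionAt v L, completionAt_isLattice v, rfl⟩

theorem two_ne_zero_Fv (v : HeightOneSpectrum (NumberField.RingOfIntegers F)) :
    (2 : Fv F v) ≠ 0 :=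
  map_ofNat (algebraMap F (Fv F v)) 2 ▸ (map_ne_zero _).2 two_ne_zero

theorem isLocADC_of_isMaximal (hQ : Nondeg Q) (hL : IsMaximal (OF F) Q L) (n : ℕ) :
    IsLocADC F Q L n := fun v ↦ by
  have := finiteDimensional_of_isLattice (K := F) L
  rw [← coe_completionAt]
  exact ((isMaximalIntegral_of_isMaximal hL).completion v).isADC (two_ne_zero_Fv v)
    (nondeg_Qv v hQ) (Submodule.IsLattice.span_eq_top (A := Fv F v)) n

theorem QGlob.IsLocADC.exists_isometryEquiv_mem {n : ℕ} (hL : IsLocADC F Q L n)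
    (hQ' : Nondeg Q') (hn : Module.finrank F W = n) (N : Submodule (OF F) W) [N.IsLattice F]
    (hN : IsIntegral (OF F) Q' N) (σ : Q' →qᵢ Q) :
    ∃ g : ∀ v, (Qv F Q v).IsometryEquiv (Qv F Q v),
      (∀ v, ∀ x ∈ N, g v (toVv F v (σ x)) ∈ completionAt v L) ∧
        {v | g v ≠ QuadraticMap.IsometryEquiv.refl _}.Finite := by
  classical
  have := finiteDimensional_of_isLattice (K := F) N
  have hloc (v) : ∃ g : (Qv F Q v).IsometryEquiv (Qv F Q v),
      ∀ z ∈ completionAt v N, g (localIsometry v σ z) ∈ completionAt v L := by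
    have hLv := hL v
    rw [← coe_completionAt] at hLv
    exact hLv.exists_isometryEquiv_mem (two_ne_zero_Fv v) (nondeg_Qv v hQ')
      (Module.finrank_baseChange.trans hn) (isLatticeOn_completionAt v N) (hN.completion v)
      (localIsometry v σ)
  choose g hg using hloc
  let A : Submodule (OF F) V := N.map (σ.toLinearMap.restrictScalars (OF F))
  have hfin := finite_setOf_not_completionAt_le
    ((Submodule.IsLattice.fg (A := F) (M := N)).map (σ.toLinearMap.restrictScalars (OF F)))
    (Submodule.IsLattice.span_eq_top (A := F) (M := L))
  refine ⟨fun v ↦ if completionAt v A ≤ completionAt v L then .refl _ else g v, fun v x hx ↦ ?_, ?_⟩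
  · dsimp only
    split_ifs with h
    · exact h (toVv_mem_completionAt v ⟨x, hx, rfl⟩)
    · exact localIsometry_toVv v σ x ▸ hg v _ (toVv_mem_completionAt v hx)
  · exact hfin.subset fun v hv h ↦ hv (if_pos h)

theorem QGlob.ClassNumberOne.exists_isometry_mem (hcls : ClassNumberOne F Q L) (hQ : Nondeg Q)
    (g : ∀ v, (Qv F Q v).IsometryEquiv (Qv F Q v))
    (hg : {v | g v ≠ QuadraticMap.IsometryEquiv.refl _}.Finite) :
    ∃ τ : Q →qᵢ Q, ∀ x, (∀ v, g v (toVv F v x) ∈ completionAt v L) → τ x ∈ L := by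
  let M (v) : Submodule (Ov F v) (Vv F V v) :=
    (completionAt v L).comap ((g v).toLinearEquiv.toLinearMap.restrictScalars (Ov F v))
  have hfg (v) : (M v).FG := by
    let e := (g v).toLinearEquiv.restrictScalars (Ov F v)
    have : M v = (completionAt v L).map (e.symm : _ →ₗ[Ov F v] _) :=
      Submodule.comap_equiv_eq_map_symm e _
    exact this ▸ (Submodule.IsLattice.fg (A := Fv F v)).map _
  have hspan (v) : Submodule.span (Fv F v) (M v : Set (Vv F V v)) = ⊤ :=
    span_comap_eq_top (Submodule.IsLattice.span_eq_top (A := Fv F v)) _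
  have hM : {v | M v ≠ completionAt v L}.Finite := hg.subset fun v hv h ↦ hv <| by
    ext z
    rw [Submodule.mem_comap, h]
    rfl
  have : (glue M).IsLattice F := glue_isLattice hfg hspan hM
  obtain ⟨τ, -, hτ, hτL⟩ := hcls V Q hQ (glue M) (isLatticeOn_iff.2 ⟨_, this, rfl⟩)
    ⟨.refl _ _, fun _ ↦ rfl⟩ fun v ↦ ⟨(g v).toLinearEquiv.toLinearMap, (g v).injective,
      (g v).map_app, by
        rw [← coe_completionAt, ← coe_completionAt, completionAt_glue this.span_eq_top]
        exact Set.image_preimage_eq (completionAt v L : Set (Vv F V v)) (g v).surjective⟩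
  exact ⟨⟨τ, hτ⟩, fun x hx ↦ hτL.subset ⟨x, hx, rfl⟩⟩

end Main

theorem classNumberOne_locADC_or_maximal_implies_globADC_general
    (F : Type) [Field F] [NumberField F] {V : Type} [AddCommGroup V] [Module F V]
    (Q : QuadraticForm F V) (hQ : Nondeg Q) (L : Set V) (hL : IsLatticeOn (OF F) L)
    (hcls : ClassNumberOne F Q L) (n : ℕ) :
    (IsLocADC F Q L n → IsADC (OF F) Q L n) ∧ (IsMaximal (OF F) Q L → IsADC (OF F) Q L n) := by
  obtain ⟨L, hLlat, rfl⟩ := isLatticeOn_iff.1 hL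
  suffices hADC : IsLocADC F Q L n → IsADC (OF F) Q L n from
    ⟨hADC, fun hmax ↦ hADC (isLocADC_of_isMaximal hQ hmax n)⟩
  rintro hloc W _ _ Q' hQ' hn N hN hNint ⟨σ, -, hσ⟩
  obtain ⟨N, hNlat, rfl⟩ := isLatticeOn_iff.1 hN
  let σ : Q' →qᵢ Q := ⟨σ, hσ⟩
  obtain ⟨g, hgN, hg⟩ := hloc.exists_isometryEquiv_mem hQ' hn N hNint σ
  obtain ⟨τ, hτ⟩ := hcls.exists_isometry_mem hQ g hg
  let ρ : Q' →qᵢ Q := τ.comp σ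
  exact ⟨ρ.toLinearMap, injective_of_isometry hQ' ρ, ρ.map_app,
    Set.image_subset_iff.2 fun x hx ↦ hτ (σ x) fun v ↦ hgN v x hx⟩

/-- Let `F` be a totally real number field, `L` a positive definite
integral `O_F`-lattice of class number one, and `n` a positive integer.
(i) If `L` is locally `n`-ADC, then `L` is globally `n`-ADC.
(ii) If `L` is `O_F`-maximal, then `L` is globally `n`-ADC. -/
theorem classNumberOne_locADC_or_maximal_implies_globADC
    (F : Type) [Field F] [NumberField F] (hF : TotallyReal F)
    {V : Type} [AddCommGroup V] [Module F V]
    (Q : QuadraticForm F V) (hQ : Nondeg Q) (hQpos : PosDef F Q)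
    (L : Set V) (hL : IsLatticeOn (OF F) L) (hLint : IsIntegral (OF F) Q L)
    (hcls : ClassNumberOne F Q L) (n : ℕ) (hn : 1 ≤ n) :
    (IsLocADC F Q L n → IsGlobADC F Q L n) ∧
    (IsMaximal (OF F) Q L → IsGlobADC F Q L n) := by
  have hADC := classNumberOne_locADC_or_maximal_implies_globADC_general F Q hQ L hL hcls n
  exact ⟨fun h W _ _ Q' hQ' _ ↦ hADC.1 h W Q' hQ', fun h W _ _ Q' hQ' _ ↦ hADC.2 h W Q' hQ'⟩
end
end

section
/- Let F be a number field, V a nondegenerate quadratic space over F, and 𝔭 a finite place of F with completion F_𝔭. For every nondegenerate F_𝔭-subspace U' of V_𝔭 := F_𝔭 ⊗_F V, there exists an F-subspace U of V such that U_𝔭 := F_𝔭 ⊗_F U is isometric to U' as a quadratic space over F_𝔭. -/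
set_option synthInstance.maxHeartbeats 1000000

/-
Quadratic lattices over (local and global) fields, following
"On n-ADC integral quadratic lattices over totally real number fields".

A non-archimedean local field of characteristic ≠ 2 is formalized as a field `K`
together with a valuation subring `O` of `K` which is a complete discrete valuation
ring with finite residue field (completeness is expressed as adic completeness with
respect to the maximal ideal); `K` is automatically the fraction field of `O`.
-/

noncomputable section

open scoped TensorProduct
open IsDedekindDomain

open QLat QGlob IsDedekindDomain

/-!
The isometry class of a nondegenerate quadratic form over a complete field `K` of characteristic
not two is locally constant. Indeed, let `G` be an invertible symmetric matrix and `H` a symmetric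
matrix close to it. By the inverse function theorem squaring is a local homeomorphism of the matrix
algebra at `1`, so `G⁻¹ * H` has a unique square root `P` near `1`. The anti-involution
`σ X = G⁻¹ * Xᵀ * G` fixes `G⁻¹ * H`, hence by uniqueness it fixes `P`, and
`H = G * P * P = G * σ P * P = Pᵀ * G * P`.

Write a basis of the local subspace in terms of finitely many global vectors. Since `F` is dense in
`K`, the coefficients may be moved to nearby elements of `F`; the new vectors span an `F`-subspace,
and the Gram matrix has changed so little that its isometry class has not.
-/

open Filter Topology
open scoped Matrix

section SquareRoots

variable {A : Type*} [NormedRing A]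

theorem hasStrictFDerivAt_mul_self_one (𝕜 : Type*) [NontriviallyNormedField 𝕜] [NormedAlgebra 𝕜 A]
    [Invertible (2 : 𝕜)] :
    HasStrictFDerivAt (fun x : A ↦ x * x)
      ((ContinuousLinearEquiv.smulLeft (unitOfInvertible (2 : 𝕜)) : A ≃L[𝕜] A) : A →L[𝕜] A) 1 := by
  have h := (hasStrictFDerivAt_id (𝕜 := 𝕜) (1 : A)).mul' (hasStrictFDerivAt_id (1 : A))
  refine h.congr_fderiv (ContinuousLinearMap.ext fun x ↦ ?_)
  simp [Units.smul_def, two_smul]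

theorem eventually_exists_fixed_mul_self_eq [CompleteSpace A] (𝕜 : Type*)
    [NontriviallyNormedField 𝕜] [NormedAlgebra 𝕜 A] [Invertible (2 : 𝕜)] {σ : A → A}
    (hσ : ContinuousAt σ 1) (hσ_one : σ 1 = 1) (hσ_sq : ∀ x, σ (x * x) = σ x * σ x) :
    ∀ᶠ t in 𝓝 (1 : A), σ t = t → ∃ x, σ x = x ∧ x * x = t := by
  have hsq := hasStrictFDerivAt_mul_self_one (A := A) 𝕜
  let r : A → A := hsq.localInverse
  have hr : Tendsto r (𝓝 1) (𝓝 1) := by simpa [r] using hsq.localInverse_tendsto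
  have hσr : Tendsto (σ ∘ r) (𝓝 1) (𝓝 1) := by simpa [hσ_one] using hσ.tendsto.comp hr
  have hleft : ∀ᶠ x in 𝓝 (1 : A), r (x * x) = x := hsq.eventually_left_inverse
  have hright : ∀ᶠ t in 𝓝 (1 : A), r t * r t = t := by simpa [r] using hsq.eventually_right_inverse
  filter_upwards [hright, hσr.eventually hleft] with t ht hσt hfix
  refine ⟨r t, ?_, ht⟩
  calc
    σ (r t) = r (σ (r t) * σ (r t)) := hσt.symm
    _ = r t := by rw [← hσ_sq, ht, hfix]

end SquareRoots

section Discriminant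

variable {K n : Type*} [CommRing K] [Invertible (2 : K)] [Fintype n] [DecidableEq n]

theorem quadraticForm_toMatrix'_injective :
    Function.Injective (QuadraticForm.toMatrix' : QuadraticForm K (n → K) → Matrix n n K) :=
  (LinearMap.toMatrix₂' K).injective.comp (QuadraticMap.associated_rightInverse K).injective

theorem toMatrix'_comp_comp_toLin' {m W : Type*} [Fintype m] [DecidableEq m] [AddCommGroup W]
    [Module K W] (q : QuadraticForm K W) (g : (m → K) →ₗ[K] W) (A : Matrix m n K) :
    QuadraticForm.toMatrix' (q.comp (g ∘ₗ A.toLin')) =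
      Aᵀ * QuadraticForm.toMatrix' (q.comp g) * A := by
  have hcomp : QuadraticMap.associated (q.comp (g ∘ₗ A.toLin')) =
      (QuadraticMap.associated (q.comp g)).compl₁₂ A.toLin' A.toLin' :=
    QuadraticMap.associated_comp K (q.comp g) A.toLin'
  rw [QuadraticForm.toMatrix', hcomp, LinearMap.toMatrix₂'_compl₁₂, LinearMap.toMatrix'_toLin',
    QuadraticForm.toMatrix']

variable [IsDomain K] {W : Type*} [AddCommGroup W] [Module K W]

theorem separatingLeft_associated_iff_discr'_ne_zero {Q : QuadraticForm K (n → K)} :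
    (QuadraticMap.associated Q).SeparatingLeft ↔ Q.discr' ≠ 0 := by
  rw [LinearMap.separatingLeft_iff_det_ne_zero (Pi.basisFun K n), QuadraticForm.discr',
    ← QuadraticForm.toMatrix_eq_toMatrix', QuadraticForm.toMatrix]

theorem injective_of_discr'_comp_ne_zero {q : QuadraticForm K W} {f : (n → K) →ₗ[K] W}
    (h : QuadraticForm.discr' (q.comp f) ≠ 0) : Function.Injective f := by
  refine (injective_iff_map_eq_zero f).2 fun x hx ↦ ?_
  refine separatingLeft_associated_iff_discr'_ne_zero.2 h x fun y ↦ ?_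
  simp [QuadraticMap.associated_comp, hx]

theorem discr'_comp_linearEquiv_ne_zero {q : QuadraticForm K W}
    (hq : q.polarBilin.SeparatingLeft) (e : (n → K) ≃ₗ[K] W) :
    QuadraticForm.discr' (q.comp (e : (n → K) →ₗ[K] W)) ≠ 0 := by
  refine separatingLeft_associated_iff_discr'_ne_zero.1 fun x hx ↦ ?_
  refine e.map_eq_zero_iff.1 (hq _ fun y ↦ ?_)
  have hxy : QuadraticMap.associated q (e x) y = 0 := by
    simpa [QuadraticMap.associated_comp] using hx (e.symm y)
  rw [← QuadraticMap.two_nsmul_associated K, LinearMap.smul_apply, LinearMap.smul_apply, hxy,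
    smul_zero]

end Discriminant

section Equivalence

theorem comp_equivalent_restrict_range {R M N P : Type*} [CommRing R] [AddCommGroup M]
    [AddCommGroup N] [AddCommGroup P] [Module R M] [Module R N] [Module R P]
    (q : QuadraticMap R N P) {f : M →ₗ[R] N} (hf : Function.Injective f) :
    (q.comp f).Equivalent (q.restrict (LinearMap.range f)) :=
  ⟨((q.restrict (LinearMap.range f)).isometryEquivOfCompLinearEquiv
    (LinearEquiv.ofInjective f hf)).symm⟩

theorem equivalent_of_toMatrix'_eq {K n : Type*} [Field K] [Invertible (2 : K)] [Fintype n]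
    [DecidableEq n] {Q₁ Q₂ : QuadraticForm K (n → K)} {P : Matrix n n K}
    (h : Q₁.toMatrix' = Pᵀ * Q₂.toMatrix' * P) (hQ₁ : Q₁.discr' ≠ 0) : Q₁.Equivalent Q₂ := by
  obtain rfl : Q₁ = Q₂.comp P.toLin' := quadraticForm_toMatrix'_injective <| by
    rw [h, QuadraticForm.toMatrix'_comp, LinearMap.toMatrix'_toLin']
  exact ⟨(Q₂.isometryEquivOfCompLinearEquiv
    (LinearEquiv.ofInjectiveEndo _ (injective_of_discr'_comp_ne_zero hQ₁))).symm⟩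

end Equivalence

section LocalConstancy

variable {K n : Type*} [NontriviallyNormedField K] [CompleteSpace K] [Invertible (2 : K)]
  [Fintype n] [DecidableEq n]

open scoped Matrix.Norms.Operator in
theorem eventually_exists_eq_transpose_mul_mul {G : Matrix n n K} (hG : G.IsSymm)
    (hdet : IsUnit G.det) : ∀ᶠ H in 𝓝 G, H.IsSymm → ∃ P : Matrix n n K, H = Pᵀ * G * P := by
  -- The operator norm uniformity agrees with the entrywise one only up to unfolding.
  have : @CompleteSpace (Matrix n n K) PseudoMetricSpace.toUniformSpace :=
    FiniteDimensional.complete K _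
  let σ : Matrix n n K → Matrix n n K := fun X ↦ G⁻¹ * Xᵀ * G
  have hσ : Continuous σ := by fun_prop
  have hσ_one : σ 1 = 1 := by simp [σ, Matrix.nonsing_inv_mul _ hdet]
  have hσ_sq (X) : σ (X * X) = σ X * σ X := by
    simp only [σ, Matrix.transpose_mul, Matrix.mul_assoc,
      Matrix.mul_nonsing_inv_cancel_left _ _ hdet]
  have hlim : Tendsto (fun H ↦ G⁻¹ * H) (𝓝 G) (𝓝 1) := by
    have hcont : Continuous fun H : Matrix n n K ↦ G⁻¹ * H := by fun_prop
    simpa [Matrix.nonsing_inv_mul _ hdet] using hcont.tendsto G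
  filter_upwards [hlim.eventually
    (eventually_exists_fixed_mul_self_eq K hσ.continuousAt hσ_one hσ_sq)] with H hroot hH
  have hfix : σ (G⁻¹ * H) = G⁻¹ * H := by
    simp [σ, Matrix.transpose_mul, Matrix.transpose_nonsing_inv, hG.eq, hH.eq, Matrix.mul_assoc,
      Matrix.nonsing_inv_mul _ hdet]
  obtain ⟨P, hσP, hPP⟩ := hroot hfix
  refine ⟨P, ?_⟩
  calc
    H = G * (P * P) := by rw [hPP, Matrix.mul_nonsing_inv_cancel_left _ _ hdet]
    _ = G * (σ P * P) := by rw [hσP]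
    _ = Pᵀ * G * P := by
      simp only [σ, ← Matrix.mul_assoc, Matrix.mul_nonsing_inv _ hdet, Matrix.one_mul]

theorem eventually_equivalent_of_toMatrix'_eq {Q : QuadraticForm K (n → K)} (hQ : Q.discr' ≠ 0) :
    ∀ᶠ H in 𝓝 Q.toMatrix', ∀ Q' : QuadraticForm K (n → K), Q'.toMatrix' = H → Q'.Equivalent Q := by
  have hdet : ∀ᶠ H : Matrix n n K in 𝓝 Q.toMatrix', H.det ≠ 0 :=
    (continuous_id.matrix_det.tendsto Q.toMatrix').eventually_ne hQ
  filter_upwards [hdet, eventually_exists_eq_transpose_mul_mul Q.isSymm_toMatrix' hQ.isUnit] with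
    H hH hcongr Q' hQ'
  obtain ⟨P, hP⟩ := hcongr (hQ' ▸ Q'.isSymm_toMatrix')
  exact equivalent_of_toMatrix'_eq (hQ'.trans hP) (by rwa [QuadraticForm.discr', hQ'])

theorem eventually_restrict_range_equivalent {m W : Type*} [Finite m] [AddCommGroup W]
    [Module K W] (q : QuadraticForm K W) (g : (m → K) →ₗ[K] W) {A : Matrix m n K}
    (hA : QuadraticForm.discr' (q.comp (g ∘ₗ A.toLin')) ≠ 0) :
    ∀ᶠ B : Matrix m n K in 𝓝 A,
      (q.restrict (LinearMap.range (g ∘ₗ B.toLin'))).Equivalent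
        (q.restrict (LinearMap.range (g ∘ₗ A.toLin'))) := by
  classical
  have := Fintype.ofFinite m
  have hgram : Continuous fun B : Matrix m n K ↦
      QuadraticForm.toMatrix' (q.comp (g ∘ₗ B.toLin')) := by
    simp only [toMatrix'_comp_comp_toLin']
    fun_prop
  have hdiscr : ∀ᶠ B in 𝓝 A, QuadraticForm.discr' (q.comp (g ∘ₗ B.toLin')) ≠ 0 :=
    (hgram.matrix_det.tendsto A).eventually_ne hA
  filter_upwards [hdiscr, (hgram.tendsto A).eventually (eventually_equivalent_of_toMatrix'_eq hA)]
    with B hB hBA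
  exact (comp_equivalent_restrict_range q (injective_of_discr'_comp_ne_zero hB)).symm.trans <|
    (hBA _ rfl).trans <| comp_equivalent_restrict_range q (injective_of_discr'_comp_ne_zero hA)

end LocalConstancy

section Coordinates

theorem exists_finset_le_span_image {K W α : Type*} [Semiring K] [AddCommMonoid W] [Module K W]
    {ι : α → W} (hι : Submodule.span K (Set.range ι) = ⊤) {U : Submodule K W} (hU : U.FG) :
    ∃ s : Finset α, U ≤ Submodule.span K (ι '' s) := by
  classical
  obtain ⟨t, rfl⟩ := hU
  obtain ⟨T, hTι, hT⟩ := Submodule.subset_span_finite_of_subset_span (s := Set.range ι) (t := t)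
    (by rw [hι]; exact Set.subset_univ _)
  obtain ⟨s, -, rfl⟩ := Finset.subset_set_image_iff.1 (Set.image_univ (f := ι) ▸ hTι)
  exact ⟨s, Submodule.span_le.2 (by simpa using hT)⟩

theorem exists_matrix_comp_toLin'_eq {K m n W : Type*} [Fintype n] [DecidableEq n] [CommRing K]
    [AddCommGroup W] [Module K W] {g : (m → K) →ₗ[K] W} {f : (n → K) →ₗ[K] W}
    (h : LinearMap.range f ≤ LinearMap.range g) :
    ∃ A : Matrix m n K, g ∘ₗ A.toLin' = f := by
  choose c hc using fun i ↦ h (LinearMap.mem_range_self f (Pi.single i 1))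
  refine ⟨(Matrix.of c)ᵀ, LinearMap.pi_ext' fun i ↦ LinearMap.ext_ring ?_⟩
  have hcol : (Matrix.of c)ᵀ.col i = c i := rfl
  simp [hcol, hc]

theorem denseRange_matrix_map {m n α β : Type*} [TopologicalSpace β] {f : α → β}
    (hf : DenseRange f) : DenseRange fun A : Matrix m n α ↦ A.map f :=
  .piMap fun _ ↦ .piMap fun _ ↦ hf

variable {m n : Type*} [Fintype m] [Fintype n] [DecidableEq n]

theorem range_linearCombination_comp_toLin' {R M : Type*} [CommRing R] [AddCommGroup M]
    [Module R M] (v : m → M) (A : Matrix m n R) :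
    LinearMap.range (Fintype.linearCombination R v ∘ₗ A.toLin') =
      Submodule.span R (Set.range fun i ↦ ∑ j, A j i • v j) := by
  rw [LinearMap.range_comp, Matrix.range_toLin', Submodule.map_span, ← Set.range_comp]
  rfl

theorem span_image_range_linearCombination_comp_toLin' {F K V W : Type*} [CommRing F] [CommRing K]
    [Algebra F K] [AddCommGroup V] [Module F V] [AddCommGroup W] [Module F W] [Module K W]
    [IsScalarTower F K W] (ι : V →ₗ[F] W) (v : m → V) (A : Matrix m n F) :
    Submodule.span K (ι '' LinearMap.range (Fintype.linearCombination F v ∘ₗ A.toLin')) =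
      LinearMap.range
        (Fintype.linearCombination K (ι ∘ v) ∘ₗ (A.map (algebraMap F K)).toLin') := by
  rw [range_linearCombination_comp_toLin', range_linearCombination_comp_toLin',
    ← Submodule.map_coe, Submodule.map_span, Submodule.span_span_of_tower, ← Set.range_comp]
  congr! 3
  simp

end Coordinates

theorem exists_subspace_with_isometric_completion_general {F K V W : Type*} [CommRing F]
    [NontriviallyNormedField K] [CompleteSpace K] [Invertible (2 : K)] [Algebra F K]
    (hF : DenseRange (algebraMap F K)) [AddCommGroup V] [Module F V] [AddCommGroup W]
    [Module F W] [Module K W] [IsScalarTower F K W] (ι : V →ₗ[F] W)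
    (hι : Submodule.span K (Set.range ι) = ⊤) (q : QuadraticForm K W) (U' : Submodule K W)
    [FiniteDimensional K U'] (hU' : (q.restrict U').polarBilin.SeparatingLeft) :
    ∃ U : Submodule F V, (q.restrict (Submodule.span K (ι '' U))).Equivalent (q.restrict U') := by
  classical
  let φ := (Module.finBasis K U').equivFun.symm
  have hφ : LinearMap.range (U'.subtype ∘ₗ φ.toLinearMap) = U' := by simp [LinearMap.range_comp]
  obtain ⟨s, hs⟩ := exists_finset_le_span_image hι (Module.Finite.iff_fg.1 ‹FiniteDimensional K U'›)
  let v : s → V := Subtype.val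
  let g := Fintype.linearCombination K (ι ∘ v)
  have hg : U' ≤ LinearMap.range g := by
    simpa [g, v, Fintype.range_linearCombination, Set.range_comp] using hs
  obtain ⟨A, hA⟩ := exists_matrix_comp_toLin'_eq (hφ.trans_le hg)
  have hdiscr : QuadraticForm.discr' (q.comp (g ∘ₗ A.toLin')) ≠ 0 := by
    rw [hA]
    exact discr'_comp_linearEquiv_ne_zero hU' φ
  have hdense := mem_closure_iff_frequently.1 (denseRange_matrix_map hF A)
  obtain ⟨_, ⟨B, rfl⟩, hB⟩ :=
    (hdense.and_eventually (eventually_restrict_range_equivalent q g hdiscr)).exists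
  rw [hA, hφ] at hB
  refine ⟨LinearMap.range (Fintype.linearCombination F v ∘ₗ B.toLin'), ?_⟩
  rwa [span_image_range_linearCombination_comp_toLin']

/-- Let `F` be a number field, `V` a nondegenerate quadratic space
over `F`, and `𝔭` a finite place of `F` with completion `F_𝔭`.  For every nondegenerate
`F_𝔭`-subspace `U'` of `V_𝔭 = F_𝔭 ⊗_F V` there exists an `F`-subspace `U` of `V` such
that `U_𝔭 = F_𝔭 ⊗_F U` is isometric to `U'` as a quadratic space over `F_𝔭`. -/
theorem exists_subspace_with_isometric_completion
    (F : Type) [Field F] [NumberField F]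
    {V : Type} [AddCommGroup V] [Module F V] [FiniteDimensional F V]
    (Q : QuadraticForm F V) (hQ : Nondeg Q)
    (v : HeightOneSpectrum (NumberField.RingOfIntegers F))
    (U' : Submodule (Fv F v) (Vv F V v))
    (hU' : ∀ x ∈ U', (∀ y ∈ U', QuadraticMap.polar (⇑(Qv F Q v)) x y = 0) → x = 0) :
    ∃ U : Submodule F V,
      ∃ e : ↥(Submodule.span (Fv F v) (toVv F v '' (U : Set V))) ≃ₗ[Fv F v] ↥U',
        ∀ x, Qv F Q v ((e x : Vv F V v)) = Qv F Q v (x : Vv F V v) := by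
  let : NontriviallyNormedField (Fv F v) :=
    Valued.toNontriviallyNormedField (Fv F v) (WithZero (Multiplicative ℤ))
  let : Invertible (2 : Fv F v) := invertibleOfNonzero <| by
    rw [← map_ofNat (algebraMap F (Fv F v))]
    exact (map_ne_zero _).2 two_ne_zero
  have hspan : Submodule.span (Fv F v) (Set.range (TensorProduct.mk F (Fv F v) V 1)) = ⊤ := by
    rw [← LinearMap.coe_range, LinearMap.range_eq_map, ← Submodule.baseChange_eq_span,
      Submodule.baseChange_top]
  obtain ⟨U, ⟨e⟩⟩ := exists_subspace_with_isometric_completion_general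
    (HeightOneSpectrum.denseRange_algebraMap F v) (TensorProduct.mk F (Fv F v) V 1) hspan
    (Qv F Q v) U' fun x hx ↦ Subtype.ext (hU' x x.2 fun y hy ↦ hx ⟨y, hy⟩)
  exact ⟨U, e.toLinearEquiv, e.map_app⟩
end
end
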